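/- arXiv:1102.4020 — 2 statements merged into one kernel-verified Lean document; each statement's English description precedes it below -/
import Mathlib

section
/- Let u be a monotone traveling wave solution of the balanced Allen-Cahn equation in the plane, and assume u together with its derivatives up to third order is bounded on ℝ². Then the function h(x) := ∫_ℝ ∂u/∂x(x,y) · ∂u/∂y(x,y) dy is well defined and bounded on ℝ, is differentiable, and satisfies h'(x) = − c ∫_ℝ (∂u/∂y(x,y))² dy for every x ∈ ℝ; consequently ∫_a^b ∫_ℝ (∂u/∂y)² dy dx = (h(a) − h(b))/c for all a < b. -/
open Real Filter MeasureTheory Metric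

noncomputable def pdx (u : ℝ → ℝ → ℝ) (x y : ℝ) : ℝ := deriv (fun t => u t y) x

noncomputable def pdy (u : ℝ → ℝ → ℝ) (x y : ℝ) : ℝ := deriv (fun t => u x t) y

noncomputable def pdxx (u : ℝ → ℝ → ℝ) (x y : ℝ) : ℝ := deriv (fun t => pdx u t y) x

noncomputable def pdyy (u : ℝ → ℝ → ℝ) (x y : ℝ) : ℝ := deriv (fun t => pdy u x t) y

/-- `F` is a balanced double-well potential. -/
def BalancedDoubleWell (F : ℝ → ℝ) : Prop :=
  ContDiff ℝ 3 F ∧ deriv F (-1) = 0 ∧ deriv F 1 = 0 ∧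
  0 < deriv (deriv F) (-1) ∧ 0 < deriv (deriv F) 1 ∧
  (∀ s ∈ Set.Ioo (-1 : ℝ) 0, 0 < deriv F s) ∧
  (∀ s ∈ Set.Ioo (0 : ℝ) 1, deriv F s < 0) ∧
  F (-1) = 0 ∧ F 1 = 0

/-- `u` is a `C³` solution of `Δu + c uᵧ = F'(u)` on `ℝ²` with `|u| ≤ 1`
which is monotone in `y`. -/
def IsSolution (F : ℝ → ℝ) (c : ℝ) (u : ℝ → ℝ → ℝ) : Prop :=
  ContDiff ℝ 3 (fun p : ℝ × ℝ => u p.1 p.2) ∧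
  (∀ x y : ℝ, pdxx u x y + pdyy u x y + c * pdy u x y = deriv F (u x y)) ∧
  (∀ x y : ℝ, |u x y| ≤ 1) ∧
  (∀ x y : ℝ, 0 < pdy u x y)

/-- A monotone traveling wave solution connecting `-1` to `1`. -/
def IsTravelingWave (F : ℝ → ℝ) (c : ℝ) (u : ℝ → ℝ → ℝ) : Prop :=
  IsSolution F c u ∧
  (∀ x : ℝ, Tendsto (fun y => u x y) atTop (nhds 1)) ∧
  (∀ x : ℝ, Tendsto (fun y => u x y) atBot (nhds (-1)))

/-!
Put `h(x) = ∫ uₓ uᵧ dy`. By the equation, `(uₓ uᵧ, (uᵧ² - uₓ²) / 2 - F(u))` has divergence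
`-c uᵧ²`. A function with `K`-Lipschitz gradient satisfies `|∇u|² ≤ 4 K (u - inf u)`, and likewise
with `sup u - u`; so `∇u` is bounded and tends to `0` along each vertical line. In the divergence
theorem on `[a, b] × [-n, n]` the horizontal sides therefore contribute `-F(m)` and `-F(l)`, where
`m` and `l` are the limits of `u` at `y = ∓∞`; as the potential is balanced they cancel, and
`h(b) - h(a) = -c ∫_a^b ∫ uᵧ² dy dx`.

To differentiate this one needs `x ↦ ∫ uᵧ² dy` to be continuous. The mass `∫ uᵧ dy = l - m` does not
depend on `x`, so by Dini's theorem the tails of `∫ uᵧ dy`, which dominate those of `∫ uᵧ² dy` up to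
a constant, are locally uniformly small.
-/

open Function (uncurry)
open Set (Icc)
open scoped Topology NNReal

section LipschitzGradient

variable {E G : Type*} [NormedAddCommGroup E] [NormedSpace ℝ E]
  [NormedAddCommGroup G] [NormedSpace ℝ G] {K : ℝ≥0}

lemma lipschitzWith_fderiv_of_norm_iteratedFDeriv_two_le {f : E → G} (hf : ContDiff ℝ 2 f)
    (hK : ∀ p, ‖iteratedFDeriv ℝ 2 f p‖ ≤ K) : LipschitzWith K (fderiv ℝ f) := by
  refine lipschitzWith_of_nnnorm_fderiv_le
    ((hf.fderiv_right (m := 1) one_add_one_eq_two.le).differentiable one_ne_zero) fun p => ?_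
  rw [← NNReal.coe_le_coe, coe_nnnorm, ← norm_iteratedFDeriv_one, norm_iteratedFDeriv_fderiv]
  exact hK p

lemma norm_sub_sub_fderiv_le_of_lipschitzWith {f : E → G} (hf : Differentiable ℝ f)
    (hK : LipschitzWith K (fderiv ℝ f)) (p v : E) :
    ‖f (p + v) - f p - fderiv ℝ f p v‖ ≤ K * ‖v‖ ^ 2 := by
  have bound : ∀ q ∈ closedBall p ‖v‖, ‖fderiv ℝ f q - fderiv ℝ f p‖ ≤ K * ‖v‖ := fun q hq =>
    (hK.norm_sub_le q p).trans
      (mul_le_mul_of_nonneg_left (mem_closedBall_iff_norm.1 hq) K.coe_nonneg)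
  have h := (convex_closedBall p ‖v‖).norm_image_sub_le_of_norm_fderiv_le'
    (fun q _ => hf q) bound (mem_closedBall_self (norm_nonneg v))
    (y := p + v) (by simp)
  rwa [add_sub_cancel_left, mul_assoc, ← sq] at h

variable {f : E → ℝ} {e : ℝ}

-- The quadratic upper bound at `p` stays above `e` along every line, so its discriminant is `≤ 0`.
lemma norm_fderiv_sq_le_of_lipschitzWith (hf : Differentiable ℝ f)
    (hK : LipschitzWith K (fderiv ℝ f)) (he : ∀ p, e ≤ f p) (p : E) :
    ‖fderiv ℝ f p‖ ^ 2 ≤ 4 * K * (f p - e) := by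
  have directional (v : E) : (fderiv ℝ f p v) ^ 2 ≤ 4 * K * (f p - e) * ‖v‖ ^ 2 := by
    have quadratic (s : ℝ) :
        0 ≤ (K * ‖v‖ ^ 2) * (s * s) + fderiv ℝ f p v * s + (f p - e) := by
      have h := (abs_le.1 (norm_sub_sub_fderiv_le_of_lipschitzWith hf hK p (s • v))).2
      rw [map_smul, smul_eq_mul, norm_smul, mul_pow, Real.norm_eq_abs, sq_abs] at h
      linarith [he (p + s • v)]
    have h := discrim_le_zero quadratic
    rw [discrim] at h
    linarith
  have hnonneg : 0 ≤ 4 * K * (f p - e) := by have := sub_nonneg.2 (he p); positivity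
  rw [← Real.le_sqrt (norm_nonneg _) hnonneg]
  refine ContinuousLinearMap.opNorm_le_bound _ (Real.sqrt_nonneg _) fun v => ?_
  refine abs_le_of_sq_le_sq ?_ (by positivity)
  rw [mul_pow, Real.sq_sqrt hnonneg]
  exact directional v

lemma exists_norm_fderiv_le_of_mem_Icc {m l : ℝ} (hf : Differentiable ℝ f)
    (hK : LipschitzWith K (fderiv ℝ f)) (hmem : ∀ p, f p ∈ Icc m l) :
    ∃ M, ∀ p, ‖fderiv ℝ f p‖ ≤ M := by
  refine ⟨√(4 * K * (l - m)), fun p => Real.le_sqrt_of_sq_le ?_⟩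
  calc ‖fderiv ℝ f p‖ ^ 2 ≤ 4 * K * (f p - m) :=
        norm_fderiv_sq_le_of_lipschitzWith hf hK (fun q => (hmem q).1) p
    _ ≤ 4 * K * (l - m) := by gcongr; exact (hmem p).2

variable {ι : Type*} {𝓕 : Filter ι} {γ : ι → E}

lemma tendsto_fderiv_zero_of_tendsto_lower_bound (hf : Differentiable ℝ f)
    (hK : LipschitzWith K (fderiv ℝ f)) (he : ∀ p, e ≤ f p)
    (hγ : Tendsto (fun i => f (γ i)) 𝓕 (𝓝 e)) :
    Tendsto (fun i => fderiv ℝ f (γ i)) 𝓕 (𝓝 0) := by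
  rw [tendsto_zero_iff_norm_tendsto_zero]
  have hsq : Tendsto (fun i => ‖fderiv ℝ f (γ i)‖ ^ 2) 𝓕 (𝓝 0) :=
    squeeze_zero (fun _ => sq_nonneg _)
      (fun i => norm_fderiv_sq_le_of_lipschitzWith hf hK he (γ i))
      (by simpa using (hγ.sub_const e).const_mul (4 * (K : ℝ)))
  simpa using hsq.sqrt

lemma tendsto_fderiv_zero_of_tendsto_upper_bound (hf : Differentiable ℝ f)
    (hK : LipschitzWith K (fderiv ℝ f)) (he : ∀ p, f p ≤ e)
    (hγ : Tendsto (fun i => f (γ i)) 𝓕 (𝓝 e)) :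
    Tendsto (fun i => fderiv ℝ f (γ i)) 𝓕 (𝓝 0) := by
  have hneg : fderiv ℝ (-f) = -fderiv ℝ f := funext fun p => fderiv_neg
  have h := tendsto_fderiv_zero_of_tendsto_lower_bound hf.neg (hneg ▸ hK.neg)
    (fun p => neg_le_neg (he p)) hγ.neg
  rw [hneg] at h
  simpa using h.neg

end LipschitzGradient

section ImproperIntegral

lemma integrable_of_hasDerivAt_of_nonneg {g g' : ℝ → ℝ} {l m : ℝ}
    (hderiv : ∀ t, HasDerivAt g (g' t) t) (hnonneg : ∀ t, 0 ≤ g' t)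
    (hbot : Tendsto g atBot (𝓝 m)) (htop : Tendsto g atTop (𝓝 l)) : Integrable g' := by
  have hright : IntegrableOn g' (Set.Ioi 0) :=
    integrableOn_Ioi_deriv_of_nonneg' (fun t _ => hderiv t) (fun t _ => hnonneg t) htop
  have hleft : IntegrableOn (g' ∘ Neg.neg) (Set.Ioi 0) :=
    integrableOn_Ioi_deriv_of_nonneg' (g := fun t => -g (-t))
      (fun t _ => by simpa using! ((hderiv (-t)).scomp t (hasDerivAt_neg t)).neg)
      (fun t _ => hnonneg (-t)) (hbot.comp tendsto_neg_atTop_atBot).neg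
  have hreflect := (Measure.measurePreserving_neg (volume : Measure ℝ)).integrableOn_comp_preimage
    (MeasurableEquiv.neg ℝ).measurableEmbedding (f := g') (s := Set.Iio 0)
  rw [← integrableOn_univ, ← Set.Iic_union_Ioi (a := 0), integrableOn_union,
    integrableOn_Iic_iff_integrableOn_Iio]
  refine ⟨hreflect.1 ?_, hright⟩
  simpa using hleft

variable {E : Type*} [NormedAddCommGroup E] [NormedSpace ℝ E]

lemma norm_integral_sub_intervalIntegral_le {G : ℝ → E} {B : ℝ → ℝ} {a b : ℝ} (hab : a ≤ b)
    (hG : Integrable G) (hB : Integrable B) (hle : ∀ y, ‖G y‖ ≤ B y) :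
    ‖(∫ y, G y) - ∫ y in a..b, G y‖ ≤ (∫ y, B y) - ∫ y in a..b, B y := by
  rw [intervalIntegral.integral_of_le hab, intervalIntegral.integral_of_le hab,
    ← setIntegral_compl measurableSet_Ioc hG, ← setIntegral_compl measurableSet_Ioc hB]
  exact norm_integral_le_of_norm_le hB.integrableOn (Eventually.of_forall hle)

variable {X : Type*} [TopologicalSpace X] {B : X → ℝ → ℝ}

lemma tendstoLocallyUniformly_intervalIntegral_of_nonneg [FirstCountableTopology X]
    (hcont : Continuous (uncurry B)) (hnonneg : ∀ x y, 0 ≤ B x y) (hint : ∀ x, Integrable (B x))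
    (hmass : Continuous fun x => ∫ y, B x y) :
    TendstoLocallyUniformly (fun (n : ℕ) x => ∫ y in -(n : ℝ)..n, B x y)
      (fun x => ∫ y, B x y) atTop := by
  refine Monotone.tendstoLocallyUniformly_of_forall_tendsto
    (fun n => intervalIntegral.continuous_parametric_intervalIntegral_of_continuous' hcont _ _)
    (fun m n hmn x => ?_) hmass (fun x => intervalIntegral_tendsto_integral (hint x)
      (tendsto_neg_atTop_atBot.comp tendsto_natCast_atTop_atTop) tendsto_natCast_atTop_atTop)
  have hmn' : (m : ℝ) ≤ n := Nat.cast_le.2 hmn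
  exact intervalIntegral.integral_mono_interval (neg_le_neg hmn')
    (neg_le_self m.cast_nonneg) hmn' (Eventually.of_forall (hnonneg x)) (hint x).intervalIntegrable

lemma tendstoLocallyUniformly_intervalIntegral_of_dominated [FirstCountableTopology X]
    {G : X → ℝ → E} (hG : ∀ x, AEStronglyMeasurable (G x)) (hle : ∀ x y, ‖G x y‖ ≤ B x y)
    (hcont : Continuous (uncurry B)) (hint : ∀ x, Integrable (B x))
    (hmass : Continuous fun x => ∫ y, B x y) :
    TendstoLocallyUniformly (fun (n : ℕ) x => ∫ y in -(n : ℝ)..n, G x y)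
      (fun x => ∫ y, G x y) atTop := by
  have hB := tendstoLocallyUniformly_intervalIntegral_of_nonneg hcont
    (fun x y => (norm_nonneg _).trans (hle x y)) hint hmass
  rw [Metric.tendstoLocallyUniformly_iff] at hB ⊢
  intro ε hε x
  obtain ⟨t, ht, h⟩ := hB ε hε x
  refine ⟨t, ht, h.mono fun n hn z hz => ?_⟩
  have hGint : Integrable (G z) := (hint z).mono' (hG z) (Eventually.of_forall (hle z))
  calc dist (∫ y, G z y) (∫ y in -(n : ℝ)..n, G z y)
      ≤ (∫ y, B z y) - ∫ y in -(n : ℝ)..n, B z y := by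
        rw [dist_eq_norm]
        exact norm_integral_sub_intervalIntegral_le (neg_le_self n.cast_nonneg) hGint (hint z)
          (hle z)
    _ ≤ dist (∫ y, B z y) (∫ y in -(n : ℝ)..n, B z y) := le_abs_self _
    _ < ε := hn z hz

end ImproperIntegral

section PartialDerivatives

variable {u : ℝ → ℝ → ℝ} {x y : ℝ}

lemma fderiv_uncurry_apply_one_zero (hu : DifferentiableAt ℝ (uncurry u) (x, y)) :
    fderiv ℝ (uncurry u) (x, y) (1, 0) = pdx u x y :=
  (hu.hasFDerivAt.comp_hasDerivAt x ((hasDerivAt_id x).prodMk (hasDerivAt_const x y))).deriv.symm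

lemma fderiv_uncurry_apply_zero_one (hu : DifferentiableAt ℝ (uncurry u) (x, y)) :
    fderiv ℝ (uncurry u) (x, y) (0, 1) = pdy u x y :=
  (hu.hasFDerivAt.comp_hasDerivAt y ((hasDerivAt_const y x).prodMk (hasDerivAt_id y))).deriv.symm

lemma hasDerivAt_pdx (hu : DifferentiableAt ℝ (uncurry u) (x, y)) :
    HasDerivAt (fun t => u t y) (pdx u x y) x :=
  DifferentiableAt.hasDerivAt (f := fun t => u t y) <|
    hu.comp (f := fun t => (t, y)) x (differentiableAt_id.prodMk (differentiableAt_const y))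

lemma hasDerivAt_pdy (hu : DifferentiableAt ℝ (uncurry u) (x, y)) :
    HasDerivAt (u x) (pdy u x y) y :=
  (hu.comp y ((differentiableAt_const x).prodMk differentiableAt_id)).hasDerivAt

lemma abs_pdx_le_norm_fderiv (hu : DifferentiableAt ℝ (uncurry u) (x, y)) :
    |pdx u x y| ≤ ‖fderiv ℝ (uncurry u) (x, y)‖ := by
  simpa [fderiv_uncurry_apply_one_zero hu, Prod.norm_def] using
    (fderiv ℝ (uncurry u) (x, y)).le_opNorm (1, 0)

lemma abs_pdy_le_norm_fderiv (hu : DifferentiableAt ℝ (uncurry u) (x, y)) :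
    |pdy u x y| ≤ ‖fderiv ℝ (uncurry u) (x, y)‖ := by
  simpa [fderiv_uncurry_apply_zero_one hu, Prod.norm_def] using
    (fderiv ℝ (uncurry u) (x, y)).le_opNorm (0, 1)

variable {k n : WithTop ℕ∞}

lemma uncurry_pdx_eq_fderiv_apply (hu : Differentiable ℝ (uncurry u)) :
    uncurry (pdx u) = fun p => fderiv ℝ (uncurry u) p (1, 0) :=
  funext fun p => (fderiv_uncurry_apply_one_zero (hu p)).symm

lemma uncurry_pdy_eq_fderiv_apply (hu : Differentiable ℝ (uncurry u)) :
    uncurry (pdy u) = fun p => fderiv ℝ (uncurry u) p (0, 1) :=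
  funext fun p => (fderiv_uncurry_apply_zero_one (hu p)).symm

lemma contDiff_pdx (hu : ContDiff ℝ n (uncurry u)) (hkn : k + 1 ≤ n) :
    ContDiff ℝ k (uncurry (pdx u)) := by
  have hn : n ≠ 0 := (zero_lt_one.trans_le (le_add_self.trans hkn)).ne'
  rw [uncurry_pdx_eq_fderiv_apply (hu.differentiable hn)]
  exact (hu.fderiv_right hkn).clm_apply contDiff_const

lemma contDiff_pdy (hu : ContDiff ℝ n (uncurry u)) (hkn : k + 1 ≤ n) :
    ContDiff ℝ k (uncurry (pdy u)) := by
  have hn : n ≠ 0 := (zero_lt_one.trans_le (le_add_self.trans hkn)).ne'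
  rw [uncurry_pdy_eq_fderiv_apply (hu.differentiable hn)]
  exact (hu.fderiv_right hkn).clm_apply contDiff_const

lemma pdy_pdx_eq_pdx_pdy (hu : ContDiff ℝ 2 (uncurry u)) (x y : ℝ) :
    pdy (pdx u) x y = pdx (pdy u) x y := by
  have hd : Differentiable ℝ (uncurry u) := hu.differentiable two_ne_zero
  have hd2 : DifferentiableAt ℝ (fderiv ℝ (uncurry u)) (x, y) :=
    (hu.fderiv_right (m := 1) one_add_one_eq_two.le).differentiable one_ne_zero _
  have hdx := (contDiff_pdx hu one_add_one_eq_two.le).differentiable one_ne_zero (x, y)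
  have hdy := (contDiff_pdy hu one_add_one_eq_two.le).differentiable one_ne_zero (x, y)
  have hsymm := hu.contDiffAt.isSymmSndFDerivAt (x := (x, y)) (by simp) (0, 1) (1, 0)
  rw [← fderiv_uncurry_apply_zero_one hdx, ← fderiv_uncurry_apply_one_zero hdy,
    uncurry_pdx_eq_fderiv_apply hd, uncurry_pdy_eq_fderiv_apply hd,
    fderiv_clm_apply hd2 (differentiableAt_const _),
    fderiv_clm_apply hd2 (differentiableAt_const _)]
  simpa using hsymm

lemma integral_pdx_add_pdy {f g : ℝ → ℝ → ℝ} (hf : Differentiable ℝ (uncurry f))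
    (hg : Differentiable ℝ (uncurry g))
    (hdiv : Continuous fun p : ℝ × ℝ => pdx f p.1 p.2 + pdy g p.1 p.2) (a b r s : ℝ) :
    ∫ x in a..b, ∫ y in r..s, (pdx f x y + pdy g x y) =
      (∫ x in a..b, g x s) - (∫ x in a..b, g x r) + (∫ y in r..s, f b y) - ∫ y in r..s, f a y := by
  have hdiv_eq : ∀ p : ℝ × ℝ, fderiv ℝ (uncurry f) p (1, 0) + fderiv ℝ (uncurry g) p (0, 1) =
      pdx f p.1 p.2 + pdy g p.1 p.2 := fun p => by
    rw [← fderiv_uncurry_apply_one_zero (hf p), ← fderiv_uncurry_apply_zero_one (hg p)]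
  have h := integral2_divergence_prod_of_hasFDerivAt_off_countable (uncurry f) (uncurry g)
    (fderiv ℝ (uncurry f)) (fderiv ℝ (uncurry g)) a r b s ∅ Set.countable_empty
    hf.continuous.continuousOn hg.continuous.continuousOn
    (fun p _ => (hf p).hasFDerivAt) (fun p _ => (hg p).hasFDerivAt)
    (by
      simp only [hdiv_eq]
      exact hdiv.continuousOn.integrableOn_compact (isCompact_uIcc.prod isCompact_uIcc))
  simp only [hdiv_eq] at h
  exact h

end PartialDerivatives

section Stress

variable {F : ℝ → ℝ} {c : ℝ} {u : ℝ → ℝ → ℝ}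

/-- The horizontal component `uₓ uᵧ` of the momentum flux of `u` in the direction `y`. -/
noncomputable def shearStress (u : ℝ → ℝ → ℝ) (x y : ℝ) : ℝ := pdx u x y * pdy u x y

/-- The vertical component `(uᵧ² - uₓ²) / 2 - F(u)` of the momentum flux of `u` in the
direction `y`; `(shearStress u, normalStress F u)` is divergence free when `Δu = F'(u)`. -/
noncomputable def normalStress (F : ℝ → ℝ) (u : ℝ → ℝ → ℝ) (x y : ℝ) : ℝ :=
  (pdy u x y ^ 2 - pdx u x y ^ 2) / 2 - F (u x y)

/-- The flux function `h(x) = ∫ uₓ uᵧ dy`. -/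
noncomputable def fluxFunction (u : ℝ → ℝ → ℝ) (x : ℝ) : ℝ := ∫ y, shearStress u x y

/-- The dissipation `∫ uᵧ² dy` on the vertical line through `x`; the flux function
loses `c` times this quantity per unit length. -/
noncomputable def dissipation (u : ℝ → ℝ → ℝ) (x : ℝ) : ℝ := ∫ y, pdy u x y ^ 2

lemma differentiable_shearStress (hu : ContDiff ℝ 2 (uncurry u)) :
    Differentiable ℝ (uncurry (shearStress u)) :=
  ((contDiff_pdx hu one_add_one_eq_two.le).mul
    (contDiff_pdy hu one_add_one_eq_two.le)).differentiable one_ne_zero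

lemma differentiable_normalStress (hF : Differentiable ℝ F) (hu : ContDiff ℝ 2 (uncurry u)) :
    Differentiable ℝ (uncurry (normalStress F u)) :=
  ((((contDiff_pdy hu one_add_one_eq_two.le).pow 2).sub
    ((contDiff_pdx hu one_add_one_eq_two.le).pow 2)).div_const 2).differentiable one_ne_zero
    |>.sub (hF.comp (hu.differentiable two_ne_zero))

lemma pdx_shearStress_add_pdy_normalStress (hF : Differentiable ℝ F)
    (hu : ContDiff ℝ 2 (uncurry u)) (x y : ℝ) :
    pdx (shearStress u) x y + pdy (normalStress F u) x y =
      (pdxx u x y + pdyy u x y - deriv F (u x y)) * pdy u x y := by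
  have hux := (contDiff_pdx hu one_add_one_eq_two.le).differentiable one_ne_zero (x, y)
  have huy := (contDiff_pdy hu one_add_one_eq_two.le).differentiable one_ne_zero (x, y)
  have hFu : HasDerivAt (fun t => F (u x t)) (deriv F (u x y) * pdy u x y) y :=
    (hF _).hasDerivAt.comp y (hasDerivAt_pdy (hu.differentiable two_ne_zero (x, y)))
  have hshear : pdx (shearStress u) x y =
      pdx (pdx u) x y * pdy u x y + pdx u x y * pdx (pdy u) x y :=
    ((hasDerivAt_pdx hux).mul (hasDerivAt_pdx huy)).deriv
  have hnormal : pdy (normalStress F u) x y =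
      pdy u x y * pdy (pdy u) x y - pdx u x y * pdy (pdx u) x y
        - deriv F (u x y) * pdy u x y := by
    refine (((((hasDerivAt_pdy huy).pow 2).sub ((hasDerivAt_pdy hux).pow 2)).div_const 2).sub
      hFu).deriv.trans ?_
    ring
  have hxx : pdxx u x y = pdx (pdx u) x y := rfl
  have hyy : pdyy u x y = pdy (pdy u) x y := rfl
  rw [hshear, hnormal, pdy_pdx_eq_pdx_pdy hu, hxx, hyy]
  ring

lemma integral_rectangle_pdy_sq (hF : Differentiable ℝ F) (hu : ContDiff ℝ 2 (uncurry u))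
    (hpde : ∀ x y, pdxx u x y + pdyy u x y + c * pdy u x y = deriv F (u x y)) (a b r s : ℝ) :
    -(c * ∫ x in a..b, ∫ y in r..s, pdy u x y ^ 2) =
      (∫ x in a..b, normalStress F u x s) - (∫ x in a..b, normalStress F u x r) +
        (∫ y in r..s, shearStress u b y) - ∫ y in r..s, shearStress u a y := by
  have hdiv : ∀ x y, pdx (shearStress u) x y + pdy (normalStress F u) x y =
      -c * pdy u x y ^ 2 := fun x y => by
    rw [pdx_shearStress_add_pdy_normalStress hF hu, ← hpde]
    ring
  have hcont : Continuous (uncurry (pdy u)) := (contDiff_pdy hu one_add_one_eq_two.le).continuous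
  rw [← integral_pdx_add_pdy (differentiable_shearStress hu) (differentiable_normalStress hF hu)
    (by simp only [hdiv]; exact (hcont.pow 2).const_mul (-c))]
  simp only [hdiv, intervalIntegral.integral_const_mul]
  rw [neg_mul]

section Boundary

variable {𝓕 : Filter ℝ} {e : ℝ}

lemma tendsto_normalStress (hF : ContinuousAt F e) (hu : Differentiable ℝ (uncurry u)) {x : ℝ}
    (hlim : Tendsto (u x) 𝓕 (𝓝 e))
    (hgrad : Tendsto (fun y => fderiv ℝ (uncurry u) (x, y)) 𝓕 (𝓝 0)) :
    Tendsto (normalStress F u x) 𝓕 (𝓝 (-F e)) := by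
  have hx : Tendsto (pdx u x) 𝓕 (𝓝 0) :=
    squeeze_zero_norm (fun y => abs_pdx_le_norm_fderiv (hu (x, y)))
      (tendsto_zero_iff_norm_tendsto_zero.1 hgrad)
  have hy : Tendsto (pdy u x) 𝓕 (𝓝 0) :=
    squeeze_zero_norm (fun y => abs_pdy_le_norm_fderiv (hu (x, y)))
      (tendsto_zero_iff_norm_tendsto_zero.1 hgrad)
  simpa using! (((hy.pow 2).sub (hx.pow 2)).div_const 2).sub (hF.tendsto.comp hlim)

lemma exists_abs_normalStress_le {m l M : ℝ} (hF : Continuous F)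
    (hu : Differentiable ℝ (uncurry u)) (hmem : ∀ x y, u x y ∈ Icc m l)
    (hM : ∀ p, ‖fderiv ℝ (uncurry u) p‖ ≤ M) : ∃ C, ∀ x y, |normalStress F u x y| ≤ C := by
  obtain ⟨C, hC⟩ := (isCompact_Icc (a := m) (b := l)).exists_bound_of_continuousOn hF.continuousOn
  refine ⟨M ^ 2 + C, fun x y => ?_⟩
  have hx := sq_le_sq.2 (((abs_pdx_le_norm_fderiv (hu (x, y))).trans (hM _)).trans (le_abs_self M))
  have hy := sq_le_sq.2 (((abs_pdy_le_norm_fderiv (hu (x, y))).trans (hM _)).trans (le_abs_self M))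
  have hFu := abs_le.1 (hC (u x y) (hmem x y))
  rw [normalStress, abs_le]
  constructor <;> linarith [sq_nonneg (pdx u x y), sq_nonneg (pdy u x y), sq_nonneg M]

lemma tendsto_intervalIntegral_normalStress [𝓕.IsCountablyGenerated] {m l M : ℝ}
    (hF : Continuous F) (hu : ContDiff ℝ 1 (uncurry u)) (hmem : ∀ x y, u x y ∈ Icc m l)
    (hM : ∀ p, ‖fderiv ℝ (uncurry u) p‖ ≤ M) (hlim : ∀ x, Tendsto (u x) 𝓕 (𝓝 e))
    (hgrad : ∀ x, Tendsto (fun y => fderiv ℝ (uncurry u) (x, y)) 𝓕 (𝓝 0)) (a b : ℝ) :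
    Tendsto (fun y => ∫ x in a..b, normalStress F u x y) 𝓕 (𝓝 (∫ _ in a..b, -F e)) := by
  have hd := hu.differentiable one_ne_zero
  obtain ⟨C, hC⟩ := exists_abs_normalStress_le hF hd hmem hM
  have hcont : Continuous (uncurry (normalStress F u)) :=
    ((((contDiff_pdy (k := 0) hu (zero_add 1).le).continuous.pow 2).sub
      ((contDiff_pdx (k := 0) hu (zero_add 1).le).continuous.pow 2)).div_const 2).sub
      (hF.comp hu.continuous)
  exact intervalIntegral.tendsto_integral_filter_of_dominated_convergence (fun _ => C)
    (Eventually.of_forall fun y => (hcont.comp (.prodMk_left y)).aestronglyMeasurable)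
    (Eventually.of_forall fun y => Eventually.of_forall fun x _ => hC x y)
    intervalIntegrable_const
    (Eventually.of_forall fun x _ => tendsto_normalStress hF.continuousAt hd (hlim x) (hgrad x))

end Boundary

lemma tendstoLocallyUniformly_intervalIntegral_pdy_sq {L M : ℝ}
    (hcont : Continuous (uncurry (pdy u))) (hnonneg : ∀ x y, 0 ≤ pdy u x y)
    (hM : ∀ x y, pdy u x y ≤ M) (hint : ∀ x, Integrable (pdy u x))
    (hL : ∀ x, ∫ y, pdy u x y = L) :
    TendstoLocallyUniformly (fun (n : ℕ) x => ∫ y in -(n : ℝ)..n, pdy u x y ^ 2)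
      (dissipation u) atTop := by
  refine tendstoLocallyUniformly_intervalIntegral_of_dominated (G := fun x y => pdy u x y ^ 2)
    (B := fun x y => M * pdy u x y) (fun x => ((hint x).aestronglyMeasurable.pow 2))
    (fun x y => ?_) (hcont.const_mul M) (fun x => (hint x).const_mul M) ?_
  · rw [Real.norm_of_nonneg (sq_nonneg _), sq]
    exact mul_le_mul_of_nonneg_right (hM x y) (hnonneg x y)
  · simp only [integral_const_mul, hL]
    exact continuous_const

lemma continuous_dissipation (hcont : Continuous (uncurry (pdy u)))
    (hdiss : TendstoLocallyUniformly (fun (n : ℕ) x => ∫ y in -(n : ℝ)..n, pdy u x y ^ 2)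
      (dissipation u) atTop) : Continuous (dissipation u) :=
  hdiss.continuous (Frequently.of_forall fun _ =>
    intervalIntegral.continuous_parametric_intervalIntegral_of_continuous' (hcont.pow 2) _ _)

lemma integrable_shearStress {M x : ℝ} (hcont : Continuous (pdx u x))
    (hM : ∀ y, |pdx u x y| ≤ M) (hint : Integrable (pdy u x)) : Integrable (shearStress u x) :=
  hint.bdd_mul hcont.aestronglyMeasurable (Eventually.of_forall hM)

lemma abs_fluxFunction_le {M x : ℝ} (hM : ∀ y, |pdx u x y| ≤ M)
    (hnonneg : ∀ y, 0 ≤ pdy u x y) (hint : Integrable (pdy u x)) :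
    |fluxFunction u x| ≤ M * ∫ y, pdy u x y := by
  rw [fluxFunction, ← Real.norm_eq_abs, ← integral_const_mul]
  refine norm_integral_le_of_norm_le (hint.const_mul M) (Eventually.of_forall fun y => ?_)
  rw [shearStress, norm_mul, Real.norm_of_nonneg (hnonneg y)]
  exact mul_le_mul_of_nonneg_right (hM y) (hnonneg y)

lemma fluxFunction_sub_eq {a b β : ℝ} (hF : Differentiable ℝ F) (hu : ContDiff ℝ 2 (uncurry u))
    (hpde : ∀ x y, pdxx u x y + pdyy u x y + c * pdy u x y = deriv F (u x y))
    (hint : ∀ x, Integrable (shearStress u x))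
    (hdiss : TendstoLocallyUniformly (fun (n : ℕ) x => ∫ y in -(n : ℝ)..n, pdy u x y ^ 2)
      (dissipation u) atTop)
    (hbot : Tendsto (fun y => ∫ x in a..b, normalStress F u x y) atBot (𝓝 β))
    (htop : Tendsto (fun y => ∫ x in a..b, normalStress F u x y) atTop (𝓝 β)) :
    fluxFunction u b - fluxFunction u a = -(c * ∫ x in a..b, dissipation u x) := by
  have hnat : Tendsto (fun n : ℕ => (n : ℝ)) atTop atTop := tendsto_natCast_atTop_atTop
  have hneg : Tendsto (fun n : ℕ => -(n : ℝ)) atTop atBot := tendsto_neg_atTop_atBot.comp hnat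
  have hcont : Continuous (uncurry fun x y => pdy u x y ^ 2) :=
    (contDiff_pdy hu one_add_one_eq_two.le).continuous.pow 2
  have hinterior : Tendsto (fun n : ℕ => ∫ x in a..b, ∫ y in -(n : ℝ)..n, pdy u x y ^ 2) atTop
      (𝓝 (∫ x in a..b, dissipation u x)) :=
    TendstoUniformlyOn.tendsto_intervalIntegral_of_continuousOn
      (Eventually.of_forall fun n =>
        (intervalIntegral.continuous_parametric_intervalIntegral_of_continuous' hcont
          _ _).continuousOn)
      (tendstoLocallyUniformly_iff_forall_isCompact.1 hdiss _ isCompact_uIcc)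
  have hboundary := ((htop.comp hnat).sub (hbot.comp hneg)).add
    (intervalIntegral_tendsto_integral (hint b) hneg hnat) |>.sub
    (intervalIntegral_tendsto_integral (hint a) hneg hnat)
  rw [sub_self, zero_add] at hboundary
  exact tendsto_nhds_unique hboundary ((hinterior.const_mul c).neg.congr fun n =>
    integral_rectangle_pdy_sq hF hu hpde a b (-n) n)

lemma hasDerivAt_fluxFunction (hcont : Continuous (dissipation u))
    (hflux : ∀ a b, fluxFunction u b - fluxFunction u a = -(c * ∫ x in a..b, dissipation u x))
    (x : ℝ) : HasDerivAt (fluxFunction u) (-(c * dissipation u x)) x := by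
  have hprimitive : fluxFunction u =
      fun t => fluxFunction u 0 + -(c * ∫ s in (0 : ℝ)..t, dissipation u s) :=
    funext fun t => by rw [← hflux 0 t, add_sub_cancel]
  rw [hprimitive]
  exact ((hcont.integral_hasStrictDerivAt 0 x).hasDerivAt.const_mul c).neg.const_add _

end Stress

theorem flux_function_identity_general {F : ℝ → ℝ} {c m l : ℝ} {u : ℝ → ℝ → ℝ} {K : ℝ≥0}
    (hF : Differentiable ℝ F) (hbalanced : F m = F l) (hu : ContDiff ℝ 2 (uncurry u))
    (hK : LipschitzWith K (fderiv ℝ (uncurry u)))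
    (hpde : ∀ x y, pdxx u x y + pdyy u x y + c * pdy u x y = deriv F (u x y))
    (hnonneg : ∀ x y, 0 ≤ pdy u x y) (hbot : ∀ x, Tendsto (u x) atBot (𝓝 m))
    (htop : ∀ x, Tendsto (u x) atTop (𝓝 l)) :
    (∀ x, Integrable (shearStress u x)) ∧
    (∃ C, ∀ x, |fluxFunction u x| ≤ C) ∧
    (∀ x, HasDerivAt (fluxFunction u) (-(c * dissipation u x)) x) ∧
    (∀ a b, c * ∫ x in a..b, dissipation u x = fluxFunction u a - fluxFunction u b) := by
  have hd : Differentiable ℝ (uncurry u) := hu.differentiable two_ne_zero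
  have hderiv (x y) : HasDerivAt (u x) (pdy u x y) y := hasDerivAt_pdy (hd (x, y))
  have hmem (x y) : u x y ∈ Icc m l :=
    have hmono := monotone_of_hasDerivAt_nonneg (hderiv x) (hnonneg x)
    ⟨hmono.le_of_tendsto (hbot x) y, hmono.ge_of_tendsto (htop x) y⟩
  obtain ⟨M, hM⟩ := exists_norm_fderiv_le_of_mem_Icc hd hK fun p => hmem p.1 p.2
  have hMx (x y) : |pdx u x y| ≤ M := (abs_pdx_le_norm_fderiv (hd (x, y))).trans (hM _)
  have hMy (x y) : |pdy u x y| ≤ M := (abs_pdy_le_norm_fderiv (hd (x, y))).trans (hM _)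
  have hint (x) : Integrable (pdy u x) :=
    integrable_of_hasDerivAt_of_nonneg (hderiv x) (hnonneg x) (hbot x) (htop x)
  have hmass (x) : ∫ y, pdy u x y = l - m :=
    integral_of_hasDerivAt_of_tendsto (hderiv x) (hint x) (hbot x) (htop x)
  have hcontx : Continuous (uncurry (pdx u)) := (contDiff_pdx hu one_add_one_eq_two.le).continuous
  have hconty : Continuous (uncurry (pdy u)) := (contDiff_pdy hu one_add_one_eq_two.le).continuous
  have hshear (x) : Integrable (shearStress u x) :=
    integrable_shearStress (hcontx.comp (.prodMk_right x)) (hMx x) (hint x)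
  have hdiss := tendstoLocallyUniformly_intervalIntegral_pdy_sq hconty hnonneg
    (fun x y => (abs_le.1 (hMy x y)).2) hint hmass
  have hbotStress := tendsto_intervalIntegral_normalStress hF.continuous (hu.of_le one_le_two) hmem
    hM hbot fun x => tendsto_fderiv_zero_of_tendsto_lower_bound hd hK
      (fun p => (hmem p.1 p.2).1) (hbot x)
  have htopStress := tendsto_intervalIntegral_normalStress hF.continuous (hu.of_le one_le_two) hmem
    hM htop fun x => tendsto_fderiv_zero_of_tendsto_upper_bound hd hK
      (fun p => (hmem p.1 p.2).2) (htop x)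
  have hflux (a b) : fluxFunction u b - fluxFunction u a = -(c * ∫ x in a..b, dissipation u x) :=
    fluxFunction_sub_eq hF hu hpde hshear hdiss (hbalanced ▸ hbotStress a b) (htopStress a b)
  refine ⟨hshear, ⟨M * (l - m), fun x => ?_⟩,
    hasDerivAt_fluxFunction (continuous_dissipation hconty hdiss) hflux, fun a b => ?_⟩
  · exact hmass x ▸ abs_fluxFunction_le (hMx x) (hnonneg x) (hint x)
  · rw [← neg_sub, hflux, neg_neg]

/-- The flux function `h(x) = ∫ uₓ uᵧ dy` is well defined, bounded,
differentiable with `h'(x) = -c ∫ uᵧ² dy`, and the resulting integral identity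
holds (computation in the proof of Lemma 2.1). -/
theorem flux_function_identity
    (F : ℝ → ℝ) (hF : BalancedDoubleWell F) (c : ℝ) (hc : 0 < c)
    (u : ℝ → ℝ → ℝ) (hu : IsTravelingWave F c u)
    (hbd : ∀ i : ℕ, i ≤ 3 → ∃ M : ℝ,
      ∀ p : ℝ × ℝ, ‖iteratedFDeriv ℝ i (fun q : ℝ × ℝ => u q.1 q.2) p‖ ≤ M) :
    (∀ x : ℝ, Integrable (fun y => pdx u x y * pdy u x y)) ∧
    (∃ C : ℝ, ∀ x : ℝ, |∫ y, pdx u x y * pdy u x y| ≤ C) ∧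
    (∀ x : ℝ, HasDerivAt (fun x' => ∫ y, pdx u x' y * pdy u x' y)
      (-(c * ∫ y, (pdy u x y) ^ 2)) x) ∧
    (∀ a b : ℝ, a < b →
      ∫ x in a..b, ∫ y, (pdy u x y) ^ 2 =
        ((∫ y, pdx u a y * pdy u a y) - ∫ y, pdx u b y * pdy u b y) / c) := by
  obtain ⟨hF3, -, -, -, -, -, -, hFbot, hFtop⟩ := hF
  obtain ⟨⟨hu3, hpde, -, hpos⟩, htop, hbot⟩ := hu
  obtain ⟨M, hM⟩ := hbd 2 (by norm_num)
  have hu2 : ContDiff ℝ 2 (uncurry u) := hu3.of_le (by norm_num)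
  have hK : LipschitzWith M.toNNReal (fderiv ℝ (uncurry u)) :=
    lipschitzWith_fderiv_of_norm_iteratedFDeriv_two_le hu2 fun p =>
      (hM p).trans (Real.le_coe_toNNReal M)
  obtain ⟨hint, hbounded, hderiv, hflux⟩ := flux_function_identity_general
    (hF3.differentiable three_ne_zero) (hFbot.trans hFtop.symm) hu2 hK hpde
    (fun x y => (hpos x y).le) hbot htop
  exact ⟨hint, hbounded, hderiv, fun a b _ =>
    (eq_div_iff hc.ne').2 ((mul_comm _ _).trans (hflux a b))⟩
end

section
/- Let u be a monotone traveling wave solution of the balanced Allen-Cahn equation in the plane, and let γ : ℝ → ℝ be the C¹ function whose graph y = γ(x) is the zero level set of u (i.e. u(x, γ(x)) = 0 for all x). Then |γ'(x)| → ∞ as |x| → ∞. -/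
open Real Filter MeasureTheory Metric

/-!
Multiplying the equation by `uᵧ` gives a divergence: `c uᵧ² = -(uₓ uᵧ)ₓ + Tᵧ`, where
`T = uₓ² / 2 - uᵧ² / 2 + F(u)` is the momentum flux. Gradients are bounded, and `u` is monotone in
`y` with limits `±1` at which `T` vanishes, so integrating over rectangles bounds both the integral
of `uᵧ²` over the plane and that of `T` over horizontal segments. Since `c ≠ 0`, `uᵧ²` is
integrable, whence `uᵧ → 0` and then `uᵧᵧ → 0` at infinity. Hence the energy `uₓ² / 2 - F(u)` of a
far away horizontal slice is almost constant on long segments. If it were below `-m < 0`, then `T`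
would be at least `m / 4` on an arbitrarily long segment, contradicting the bound on its integral.
On the level set `u = 0` therefore `uₓ²` stays above a positive multiple of `F(0) > 0` while
`uᵧ → 0`, so `|γ'| = |uₓ| / uᵧ → ∞`.
-/

open scoped Topology NNReal

section ConvergenceAtInfinity

lemma tendstoUniformlyOn_of_forall_lipschitzWith {ι X Y : Type*} [PseudoMetricSpace X]
    [PseudoMetricSpace Y] {f : ι → X → Y} {g : X → Y} {l : Filter ι} {K : ℝ≥0} {S : Set X}
    (hf : ∀ i, LipschitzWith K (f i)) (hS : IsCompact S)
    (hlim : ∀ x ∈ S, Tendsto (f · x) l (𝓝 (g x))) : TendstoUniformlyOn f g l S := by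
  have hequi : UniformEquicontinuous f := LipschitzWith.uniformEquicontinuous f K hf
  have h := (EquicontinuousOn.tendsto_uniformOnFun_iff_pi' (𝔖 := {S}) (by simpa using hS)
    (by simpa using hequi.equicontinuous.equicontinuousOn S) l g).2 (tendsto_pi_nhds.2 ?_)
  · exact UniformOnFun.tendsto_iff_tendstoUniformlyOn.1 h S rfl
  · rintro ⟨x, hx⟩
    exact hlim x (by simpa using hx)

lemma eventually_cocompact_forall_closedBall {X : Type*} [PseudoMetricSpace X] [ProperSpace X]
    {P : X → Prop} (hP : ∀ᶠ x in cocompact X, P x) (r : ℝ) :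
    ∀ᶠ x in cocompact X, ∀ y ∈ closedBall x r, P y := by
  obtain ⟨K, hK, hKP⟩ := mem_cocompact.1 hP
  filter_upwards [(hK.cthickening (r := r)).compl_mem_cocompact] with x hx y hy
  exact hKP fun hyK => hx (mem_cthickening_of_dist_le x y r K hyK (mem_closedBall'.1 hy))

lemma abs_le_of_tendsto_zero_of_le_add {f : ℝ → ℝ} {B : ℝ} (htop : Tendsto f atTop (𝓝 0))
    (hbot : Tendsto f atBot (𝓝 0)) (hf : ∀ s t, s ≤ t → f s ≤ f t + B) (y : ℝ) : |f y| ≤ B := by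
  refine abs_le.2 ⟨?_, ?_⟩
  · have h := le_of_tendsto hbot ((eventually_le_atBot y).mono fun s hs => hf s y hs)
    linarith
  · have h := ge_of_tendsto (htop.add_const B) ((eventually_ge_atTop y).mono (hf y))
    rwa [zero_add] at h

lemma integrable_of_forall_integral_integral_le {f : ℝ × ℝ → ℝ} (hf : Continuous f)
    (hnonneg : ∀ p, 0 ≤ f p) {B : ℝ}
    (hB : ∀ r, 0 ≤ r → ∫ x in -r..r, ∫ y in -r..r, f (x, y) ≤ B) : Integrable f := by
  have hcover : AECover (volume : Measure (ℝ × ℝ)) atTop (fun r => closedBall 0 r) :=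
    aecover_closedBall tendsto_id
  have hint (r : ℝ) : IntegrableOn f (closedBall 0 r) :=
    hf.continuousOn.integrableOn_compact (isCompact_closedBall 0 r)
  refine hcover.integrable_of_integral_bounded_of_nonneg_ae B hint
    (Eventually.of_forall hnonneg) ?_
  filter_upwards [eventually_ge_atTop 0] with r hr
  have hsquare : closedBall (0 : ℝ × ℝ) r = Set.Icc (-r) r ×ˢ Set.Icc (-r) r := by
    simp [← Prod.mk_zero_zero, ← closedBall_prod_same, Real.closedBall_eq_Icc]
  have hle : -r ≤ r := by linarith
  rw [hsquare, Measure.volume_eq_prod, setIntegral_prod _ (hsquare ▸ hint r),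
    integral_Icc_eq_integral_Ioc, ← intervalIntegral.integral_of_le hle]
  simp_rw [integral_Icc_eq_integral_Ioc, ← intervalIntegral.integral_of_le hle]
  exact hB r hr

variable {E : Type*} [NormedAddCommGroup E]

lemma tendsto_setIntegral_ball_cocompact [NormedSpace ℝ E] {X : Type*} [PseudoMetricSpace X]
    [ProperSpace X] [MeasurableSpace X] [OpensMeasurableSpace X] {μ : Measure X} {f : X → E}
    (hf : Integrable f μ) (r : ℝ) :
    Tendsto (fun x => ∫ y in ball x r, f y ∂μ) (cocompact X) (𝓝 0) := by
  obtain hX | ⟨⟨x₀⟩⟩ := isEmpty_or_nonempty X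
  · exact tendsto_of_isEmpty
  have : (cocompact X).IsCountablyGenerated := by
    rw [← comap_dist_left_atTop_eq_cocompact x₀]
    infer_instance
  simp_rw [← integral_indicator measurableSet_ball]
  rw [← integral_zero X E (μ := μ)]
  refine tendsto_integral_filter_of_dominated_convergence (fun y => ‖f y‖)
    (Eventually.of_forall fun x => hf.aestronglyMeasurable.indicator measurableSet_ball)
    (Eventually.of_forall fun x => Eventually.of_forall fun y => norm_indicator_le_norm_self f y)
    hf.norm (Eventually.of_forall fun y => tendsto_const_nhds.congr' ?_)
  filter_upwards [(tendsto_dist_left_cocompact_atTop y).eventually_ge_atTop r] with x hx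
  exact (Set.indicator_of_notMem (fun hy => (mem_ball.1 hy).not_ge hx) f).symm

lemma tendsto_zero_cocompact_of_uniformContinuous_of_integrable {V : Type*}
    [NormedAddCommGroup V] [ProperSpace V] [MeasurableSpace V] [BorelSpace V] {μ : Measure V}
    [μ.IsAddHaarMeasure] {f : V → E} (hf : UniformContinuous f) (hint : Integrable f μ) :
    Tendsto f (cocompact V) (𝓝 0) := by
  refine NormedAddGroup.tendsto_nhds_zero.2 fun ε hε => ?_
  obtain ⟨r, hr, hfr⟩ := uniformContinuous_iff.1 hf (ε / 2) (half_pos hε)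
  have hvol : 0 < μ.real (ball (0 : V) r) :=
    ENNReal.toReal_pos (measure_ball_pos μ 0 hr).ne' measure_ball_lt_top.ne
  have hsmall := (tendsto_setIntegral_ball_cocompact hint.norm r).eventually_lt_const
    (show 0 < ε / 2 * μ.real (ball (0 : V) r) by positivity)
  filter_upwards [hsmall] with x hx
  by_contra! hlarge
  have hball : ∀ y ∈ ball x r, ε / 2 ≤ ‖f y‖ := fun y hy => by
    have hdist := norm_sub_norm_le (f x) (f y)
    rw [← dist_eq_norm, dist_comm] at hdist
    linarith [hfr hy]
  refine hx.not_ge ?_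
  rw [← Measure.addHaar_real_ball_center μ x]
  exact setIntegral_ge_of_const_le_real measurableSet_ball measure_ball_lt_top.ne hball
    hint.norm.integrableOn

end ConvergenceAtInfinity

section PartialDerivatives

variable {v w : ℝ → ℝ → ℝ}

lemma pdx_eq_fderiv (hw : ContDiff ℝ 1 (fun p : ℝ × ℝ => w p.1 p.2)) (x y : ℝ) :
    pdx w x y = fderiv ℝ (fun p : ℝ × ℝ => w p.1 p.2) (x, y) (1, 0) := by
  have h := (hw.differentiable one_ne_zero (x, y)).hasFDerivAt
  exact (h.comp_hasDerivAt (f := fun t : ℝ => (t, y)) x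
    ((hasDerivAt_id x).prodMk (hasDerivAt_const x y))).deriv

lemma pdy_eq_fderiv (hw : ContDiff ℝ 1 (fun p : ℝ × ℝ => w p.1 p.2)) (x y : ℝ) :
    pdy w x y = fderiv ℝ (fun p : ℝ × ℝ => w p.1 p.2) (x, y) (0, 1) := by
  have h := (hw.differentiable one_ne_zero (x, y)).hasFDerivAt
  exact (h.comp_hasDerivAt (f := fun t : ℝ => (x, t)) y
    ((hasDerivAt_const y x).prodMk (hasDerivAt_id y))).deriv

lemma hasDerivAt_pdx_s3 (hw : ContDiff ℝ 1 (fun p : ℝ × ℝ => w p.1 p.2)) (x y : ℝ) :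
    HasDerivAt (fun t => w t y) (pdx w x y) x := by
  have h : ContDiff ℝ 1 (fun t => w t y) :=
    hw.comp (f := fun t : ℝ => (t, y)) (contDiff_id.prodMk contDiff_const)
  exact (h.differentiable one_ne_zero x).hasDerivAt

lemma hasDerivAt_pdy_s3 (hw : ContDiff ℝ 1 (fun p : ℝ × ℝ => w p.1 p.2)) (x y : ℝ) :
    HasDerivAt (fun t => w x t) (pdy w x y) y := by
  have h : ContDiff ℝ 1 (fun t => w x t) :=
    hw.comp (f := fun t : ℝ => (x, t)) (contDiff_const.prodMk contDiff_id)
  exact (h.differentiable one_ne_zero y).hasDerivAt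

lemma contDiff_pdx_s3 {m n : WithTop ℕ∞} (hmn : m + 1 ≤ n)
    (hw : ContDiff ℝ n (fun p : ℝ × ℝ => w p.1 p.2)) :
    ContDiff ℝ m (fun p : ℝ × ℝ => pdx w p.1 p.2) := by
  have h1 : ContDiff ℝ 1 (fun p : ℝ × ℝ => w p.1 p.2) := hw.of_le (le_add_self.trans hmn)
  simp_rw [pdx_eq_fderiv h1]
  exact (hw.fderiv_right hmn).clm_apply contDiff_const

lemma contDiff_pdy_s3 {m n : WithTop ℕ∞} (hmn : m + 1 ≤ n)
    (hw : ContDiff ℝ n (fun p : ℝ × ℝ => w p.1 p.2)) :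
    ContDiff ℝ m (fun p : ℝ × ℝ => pdy w p.1 p.2) := by
  have h1 : ContDiff ℝ 1 (fun p : ℝ × ℝ => w p.1 p.2) := hw.of_le (le_add_self.trans hmn)
  simp_rw [pdy_eq_fderiv h1]
  exact (hw.fderiv_right hmn).clm_apply contDiff_const

lemma pdx_pdy_comm (hw : ContDiff ℝ 2 (fun p : ℝ × ℝ => w p.1 p.2)) :
    pdx (pdy w) = pdy (pdx w) := by
  ext x y
  have h1 : ContDiff ℝ 1 (fun p : ℝ × ℝ => w p.1 p.2) := hw.of_le one_le_two
  have h2 : DifferentiableAt ℝ (fderiv ℝ (fun p : ℝ × ℝ => w p.1 p.2)) (x, y) :=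
    (hw.fderiv_right (m := 1) (by norm_num)).differentiable one_ne_zero _
  rw [pdx_eq_fderiv (contDiff_pdy_s3 (by norm_num) hw), pdy_eq_fderiv (contDiff_pdx_s3 (by norm_num) hw)]
  simp_rw [pdx_eq_fderiv h1, pdy_eq_fderiv h1]
  rw [fderiv_clm_apply h2 (differentiableAt_const _),
    fderiv_clm_apply h2 (differentiableAt_const _)]
  simpa using (hw.contDiffAt.isSymmSndFDerivAt (by simp)) (1, 0) (0, 1)

lemma pdx_sub (hv : ContDiff ℝ 1 (fun p : ℝ × ℝ => v p.1 p.2))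
    (hw : ContDiff ℝ 1 (fun p : ℝ × ℝ => w p.1 p.2)) :
    pdx (fun x y => v x y - w x y) = fun x y => pdx v x y - pdx w x y := by
  ext x y
  exact ((hasDerivAt_pdx_s3 hv x y).sub (hasDerivAt_pdx_s3 hw x y)).deriv

lemma pdy_sub (hv : ContDiff ℝ 1 (fun p : ℝ × ℝ => v p.1 p.2))
    (hw : ContDiff ℝ 1 (fun p : ℝ × ℝ => w p.1 p.2)) :
    pdy (fun x y => v x y - w x y) = fun x y => pdy v x y - pdy w x y := by
  ext x y
  exact ((hasDerivAt_pdy_s3 hv x y).sub (hasDerivAt_pdy_s3 hw x y)).deriv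

lemma pdx_add_pdy_mul_deriv_eq_zero (hw : ContDiff ℝ 1 (fun p : ℝ × ℝ => w p.1 p.2))
    {γ : ℝ → ℝ} {x σ : ℝ} (hγ : DifferentiableAt ℝ γ x) (hσ : ∀ t, w t (γ t) = σ) :
    pdx w x (γ x) + pdy w x (γ x) * deriv γ x = 0 := by
  have hcomp := ((hw.differentiable one_ne_zero (x, γ x)).hasFDerivAt).comp_hasDerivAt
    (f := fun t : ℝ => (t, γ t)) x ((hasDerivAt_id x).prodMk hγ.hasDerivAt)
  have hconst : (fun p : ℝ × ℝ => w p.1 p.2) ∘ (fun t : ℝ => (t, γ t)) = fun _ => σ := funext hσ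
  rw [hconst] at hcomp
  have hzero := hcomp.unique (hasDerivAt_const x σ)
  have hsplit : ((1 : ℝ), deriv γ x) = (1, 0) + deriv γ x • ((0 : ℝ), (1 : ℝ)) := by simp
  rwa [hsplit, map_add, map_smul, smul_eq_mul, ← pdx_eq_fderiv hw, ← pdy_eq_fderiv hw,
    mul_comm] at hzero

lemma exists_lipschitzWith_of_abs_grad_le (hw : ContDiff ℝ 1 (fun p : ℝ × ℝ => w p.1 p.2)) {B : ℝ}
    (hB : ∀ x y, |pdx w x y| ≤ B ∧ |pdy w x y| ≤ B) :
    ∃ K, LipschitzWith K (fun p : ℝ × ℝ => w p.1 p.2) := by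
  lift B to ℝ≥0 using (abs_nonneg _).trans (hB 0 0).1
  refine ⟨B + B, LipschitzWith.uncurry (fun y => ?_) fun x => ?_⟩
  · exact lipschitzWith_of_nnnorm_deriv_le (fun x => (hasDerivAt_pdx_s3 hw x y).differentiableAt)
      fun x => (hB x y).1
  · exact lipschitzWith_of_nnnorm_deriv_le (fun y => (hasDerivAt_pdy_s3 hw x y).differentiableAt)
      fun y => (hB x y).2

lemma integral_integral_pdx_add_pdy (hv : ContDiff ℝ 1 (fun p : ℝ × ℝ => v p.1 p.2))
    (hw : ContDiff ℝ 1 (fun p : ℝ × ℝ => w p.1 p.2)) (a b s t : ℝ) :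
    ∫ x in a..b, ∫ y in s..t, (pdx v x y + pdy w x y) =
      (∫ x in a..b, w x t) - (∫ x in a..b, w x s)
        + (∫ y in s..t, v b y) - ∫ y in s..t, v a y := by
  simp_rw [pdx_eq_fderiv hv, pdy_eq_fderiv hw]
  refine integral2_divergence_prod_of_hasFDerivAt _ _ _ _ a s b t
    hv.continuous.continuousOn hw.continuous.continuousOn
    (fun p _ => (hv.differentiable one_ne_zero p).hasFDerivAt)
    (fun p _ => (hw.differentiable one_ne_zero p).hasFDerivAt) ?_
  refine (Continuous.continuousOn ?_).integrableOn_compact (isCompact_uIcc.prod isCompact_uIcc)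
  exact ((hv.continuous_fderiv one_ne_zero).clm_apply continuous_const).add
    ((hw.continuous_fderiv one_ne_zero).clm_apply continuous_const)

end PartialDerivatives

section DriftLaplacian

variable {c : ℝ} {v w : ℝ → ℝ → ℝ}

/-- The operator `Δ + c ∂ᵧ`, whose case `c = 0` is the Laplacian. -/
noncomputable def driftLaplacian (c : ℝ) (w : ℝ → ℝ → ℝ) (x y : ℝ) : ℝ :=
  pdxx w x y + pdyy w x y + c * pdy w x y

lemma driftLaplacian_sub (hv : ContDiff ℝ 2 (fun p : ℝ × ℝ => v p.1 p.2))
    (hw : ContDiff ℝ 2 (fun p : ℝ × ℝ => w p.1 p.2)) (x y : ℝ) :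
    driftLaplacian c (fun x y => v x y - w x y) x y =
      driftLaplacian c v x y - driftLaplacian c w x y := by
  have hv1 := hv.of_le one_le_two
  have hw1 := hw.of_le one_le_two
  change pdx (pdx _) x y + pdy (pdy _) x y + c * pdy _ x y =
    pdx (pdx v) x y + pdy (pdy v) x y + c * pdy v x y -
      (pdx (pdx w) x y + pdy (pdy w) x y + c * pdy w x y)
  rw [pdx_sub hv1 hw1, pdy_sub hv1 hw1,
    pdx_sub (contDiff_pdx_s3 (by norm_num) hv) (contDiff_pdx_s3 (by norm_num) hw),
    pdy_sub (contDiff_pdy_s3 (by norm_num) hv) (contDiff_pdy_s3 (by norm_num) hw)]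
  ring

lemma driftLaplacian_neg (x y : ℝ) :
    driftLaplacian c (fun x y => -w x y) x y = -driftLaplacian c w x y := by
  simp only [driftLaplacian, pdxx, pdyy, pdx, pdy, deriv.fun_neg]
  ring

lemma driftLaplacian_sub_const (σ x y : ℝ) :
    driftLaplacian c (fun x y => w x y - σ) x y = driftLaplacian c w x y := by
  simp only [driftLaplacian, pdxx, pdyy, pdx, pdy, deriv_sub_const]

lemma driftLaplacian_comp_const_add (a b x y : ℝ) :
    driftLaplacian c (fun s t => w (a + s) (b + t)) x y = driftLaplacian c w (a + x) (b + y) := by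
  have hx (w : ℝ → ℝ → ℝ) :
      pdx (fun s t => w (a + s) (b + t)) = fun s t => pdx w (a + s) (b + t) :=
    funext₂ fun s t => deriv_comp_const_add (fun r => w r (b + t)) a s
  have hy (w : ℝ → ℝ → ℝ) :
      pdy (fun s t => w (a + s) (b + t)) = fun s t => pdy w (a + s) (b + t) :=
    funext₂ fun s t => deriv_comp_const_add (w (a + s)) b t
  change pdx (pdx _) x y + pdy (pdy _) x y + c * pdy _ x y = _
  rw [hx, hx, hy, hy]
  rfl

lemma driftLaplacian_comp_const_sub (a b x y : ℝ) :
    driftLaplacian c (fun s t => w (a - s) (b + t)) x y = driftLaplacian c w (a - x) (b + y) := by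
  have hx (w : ℝ → ℝ → ℝ) :
      pdx (fun s t => w (a - s) (b + t)) = fun s t => -pdx w (a - s) (b + t) :=
    funext₂ fun s t => deriv_comp_const_sub (fun r => w r (b + t)) a s
  have hy (w : ℝ → ℝ → ℝ) :
      pdy (fun s t => w (a - s) (b + t)) = fun s t => pdy w (a - s) (b + t) :=
    funext₂ fun s t => deriv_comp_const_add (w (a - s)) b t
  change pdx (pdx _) x y + pdy (pdy _) x y + c * pdy _ x y = _
  rw [hx, hx fun s t => -pdx w s t, hy, hy]
  simp only [pdx, deriv.fun_neg, neg_neg]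
  rfl

lemma driftLaplacian_zero_swap (x y : ℝ) :
    driftLaplacian 0 (fun x y => w y x) x y = driftLaplacian 0 w y x := by
  simp only [driftLaplacian, pdxx, pdyy, pdx, pdy]
  ring

lemma driftLaplacian_quadratic (α β κ x y : ℝ) :
    driftLaplacian c (fun x y => α * y ^ 2 + β * x - κ * x ^ 2) x y =
      2 * α - 2 * κ + 2 * c * α * y := by
  have hx : pdx (fun x y => α * y ^ 2 + β * x - κ * x ^ 2) = fun x _ => β - 2 * κ * x := by
    ext x y
    simp (disch := fun_prop) [pdx]
    ring
  have hy : pdy (fun x y => α * y ^ 2 + β * x - κ * x ^ 2) = fun _ y => 2 * α * y := by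
    ext x y
    simp (disch := fun_prop) [pdy]
    ring
  change pdx (pdx _) x y + pdy (pdy _) x y + c * pdy _ x y = _
  rw [hx, hy]
  simp (disch := fun_prop) [pdx, pdy]
  ring

lemma driftLaplacian_pdy (hw : ContDiff ℝ 3 (fun p : ℝ × ℝ => w p.1 p.2)) :
    driftLaplacian c (pdy w) = pdy (driftLaplacian c w) := by
  ext x y
  have hx : ContDiff ℝ 2 (fun p : ℝ × ℝ => pdx w p.1 p.2) := contDiff_pdx_s3 (by norm_num) hw
  have hy : ContDiff ℝ 2 (fun p : ℝ × ℝ => pdy w p.1 p.2) := contDiff_pdy_s3 (by norm_num) hw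
  have hxx : ContDiff ℝ 1 (fun p : ℝ × ℝ => pdx (pdx w) p.1 p.2) := contDiff_pdx_s3 (by norm_num) hx
  have hyy : ContDiff ℝ 1 (fun p : ℝ × ℝ => pdy (pdy w) p.1 p.2) := contDiff_pdy_s3 (by norm_num) hy
  have hsum := ((hasDerivAt_pdy_s3 hxx x y).add (hasDerivAt_pdy_s3 hyy x y)).add
    ((hasDerivAt_pdy_s3 (hy.of_le one_le_two) x y).const_mul c)
  refine Eq.trans ?_ hsum.deriv.symm
  rw [← pdx_pdy_comm hx, ← pdx_pdy_comm (hw.of_le (by norm_num))]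
  rfl

lemma pdy_exp_mul (hw : ContDiff ℝ 1 (fun p : ℝ × ℝ => w p.1 p.2)) (k b : ℝ) :
    pdy (fun x y => exp (k * (y - b)) * w x y) =
      fun x y => exp (k * (y - b)) * (pdy w x y + k * w x y) := by
  ext x y
  have hexp := (((hasDerivAt_id y).sub_const b).const_mul k).exp
  refine (hexp.mul (hasDerivAt_pdy_s3 hw x y)).deriv.trans ?_
  simp only [id_eq]
  ring

/-- The gauge factor turns the drift into a zeroth order term. -/
lemma driftLaplacian_zero_exp_mul (hw : ContDiff ℝ 2 (fun p : ℝ × ℝ => w p.1 p.2)) (b x y : ℝ) :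
    driftLaplacian 0 (fun x y => exp (c / 2 * (y - b)) * w x y) x y =
      exp (c / 2 * (y - b)) * (driftLaplacian c w x y + c ^ 2 / 4 * w x y) := by
  have hw1 := hw.of_le one_le_two
  have hx (w : ℝ → ℝ → ℝ) : pdx (fun x y => exp (c / 2 * (y - b)) * w x y) =
      fun x y => exp (c / 2 * (y - b)) * pdx w x y := by
    ext x y
    exact deriv_const_mul_field _
  have hpdy : ContDiff ℝ 1 (fun p : ℝ × ℝ => pdy w p.1 p.2) := contDiff_pdy_s3 (by norm_num) hw
  have hsum : pdy (fun x y => pdy w x y + c / 2 * w x y) x y =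
      pdy (pdy w) x y + c / 2 * pdy w x y :=
    ((hasDerivAt_pdy_s3 hpdy x y).add ((hasDerivAt_pdy_s3 hw1 x y).const_mul (c / 2))).deriv
  change pdx (pdx _) x y + pdy (pdy _) x y + 0 * pdy _ x y = _ *
    (pdx (pdx w) x y + pdy (pdy w) x y + c * pdy w x y + c ^ 2 / 4 * w x y)
  rw [hx, hx, pdy_exp_mul hw1, pdy_exp_mul (hpdy.add (contDiff_const.mul hw1))]
  beta_reduce
  rw [hsum]
  ring

end DriftLaplacian

section GradientEstimate

variable {c : ℝ} {v w : ℝ → ℝ → ℝ}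

lemma deriv_deriv_nonpos_of_isLocalMax {f : ℝ → ℝ} {x : ℝ} (hmax : IsLocalMax f x)
    (hf : ContinuousAt f x) : deriv (deriv f) x ≤ 0 := by
  by_contra! hpos
  have hmin := isLocalMin_of_deriv_deriv_pos hpos hmax.deriv_eq_zero hf
  have hconst : f =ᶠ[𝓝 x] fun _ => f x := by
    filter_upwards [hmax, hmin] with t hle hge using le_antisymm hle hge
  have hzero : deriv (deriv f) x = 0 := by simpa using hconst.deriv.deriv_eq
  exact hpos.ne' hzero

lemma driftLaplacian_nonpos_of_isLocalMax (hw : Continuous (fun p : ℝ × ℝ => w p.1 p.2))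
    {x y : ℝ} (hmax : IsLocalMax (fun p : ℝ × ℝ => w p.1 p.2) (x, y)) :
    driftLaplacian c w x y ≤ 0 := by
  have hcx : Continuous (fun t : ℝ => (t, y)) := by fun_prop
  have hcy : Continuous (fun t : ℝ => (x, t)) := by fun_prop
  have hmaxx : IsLocalMax (fun t => w t y) x :=
    hmax.comp_tendsto (g := fun t => (t, y)) (hcx.tendsto x)
  have hmaxy : IsLocalMax (fun t => w x t) y :=
    hmax.comp_tendsto (g := fun t => (x, t)) (hcy.tendsto y)
  have hxx : pdxx w x y ≤ 0 :=
    deriv_deriv_nonpos_of_isLocalMax hmaxx (hw.comp hcx).continuousAt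
  have hyy : pdyy w x y ≤ 0 :=
    deriv_deriv_nonpos_of_isLocalMax hmaxy (hw.comp hcy).continuousAt
  have hy : pdy w x y = 0 := hmaxy.deriv_eq_zero
  rw [driftLaplacian, hy]
  linarith

lemma nonpos_of_driftLaplacian_pos (hw : Continuous (fun p : ℝ × ℝ => w p.1 p.2))
    {K : Set (ℝ × ℝ)} (hK : IsCompact K)
    (hpos : ∀ p ∈ interior K, 0 < driftLaplacian c w p.1 p.2)
    (hbd : ∀ p ∈ frontier K, w p.1 p.2 ≤ 0) {p : ℝ × ℝ} (hp : p ∈ K) : w p.1 p.2 ≤ 0 := by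
  obtain ⟨q, hq, hmax⟩ := hK.exists_isMaxOn ⟨p, hp⟩ hw.continuousOn
  refine (hmax hp).trans ?_
  by_cases hint : q ∈ interior K
  · have hloc := hmax.isLocalMax (mem_interior_iff_mem_nhds.1 hint)
    exact absurd (driftLaplacian_nonpos_of_isLocalMax hw hloc) (hpos q hint).not_ge
  · exact hbd q ⟨subset_closure hq, hint⟩

lemma le_of_driftLaplacian_lt (hv : ContDiff ℝ 2 (fun p : ℝ × ℝ => v p.1 p.2))
    (hw : ContDiff ℝ 2 (fun p : ℝ × ℝ => w p.1 p.2)) {K : Set (ℝ × ℝ)} (hK : IsCompact K)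
    (hlt : ∀ p ∈ interior K, driftLaplacian c w p.1 p.2 < driftLaplacian c v p.1 p.2)
    (hbd : ∀ p ∈ frontier K, v p.1 p.2 ≤ w p.1 p.2) {p : ℝ × ℝ} (hp : p ∈ K) :
    v p.1 p.2 ≤ w p.1 p.2 := by
  refine sub_nonpos.1 (nonpos_of_driftLaplacian_pos (c := c) (w := fun x y => v x y - w x y)
    (hv.sub hw).continuous hK (fun q hq => ?_) (fun q hq => sub_nonpos.2 (hbd q hq)) hp)
  rw [driftLaplacian_sub hv hw]
  exact sub_pos.2 (hlt q hq)

/-- In the barrier, `A y²` controls the horizontal sides, `A x` the right side, and the concave part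
`κ x (1 - x)` absorbs the right-hand side of the equation. -/
lemma le_barrier_of_driftLaplacian_bound (hv : ContDiff ℝ 2 (fun p : ℝ × ℝ => v p.1 p.2))
    (hv0 : ∀ t, v 0 t = 0) {A B κ : ℝ} (hκ : A + |c| * A + B / 2 < κ) (hB : 0 ≤ B)
    (hA : ∀ s ∈ Set.Icc (0 : ℝ) 1, ∀ t ∈ Set.Icc (-1 : ℝ) 1, |v s t| ≤ A)
    (hL : ∀ s ∈ Set.Icc (0 : ℝ) 1, ∀ t ∈ Set.Icc (-1 : ℝ) 1, |driftLaplacian c v s t| ≤ B)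
    {s t : ℝ} (hs : s ∈ Set.Icc (0 : ℝ) 1) (ht : t ∈ Set.Icc (-1 : ℝ) 1) :
    v s t ≤ A * t ^ 2 + (κ + A) * s - κ * s ^ 2 := by
  have hA0 : 0 ≤ A := (abs_nonneg _).trans (hA s hs t ht)
  have hκ0 : 0 ≤ κ := by linarith [mul_nonneg (abs_nonneg c) hA0]
  refine le_of_driftLaplacian_lt (c := c) (p := (s, t))
    (w := fun x y => A * y ^ 2 + (κ + A) * x - κ * x ^ 2) hv (by fun_prop)
    (isCompact_Icc.prod isCompact_Icc) ?_ ?_ ⟨hs, ht⟩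
  · rintro ⟨x, y⟩ hp
    obtain ⟨hx, hy⟩ := interior_subset hp
    have hcy : c * y ≤ |c| := (le_abs_self _).trans <| by
      rw [abs_mul]
      exact mul_le_of_le_one_right (abs_nonneg c) (abs_le.2 hy)
    have hdrift : c * y * A ≤ |c| * A := mul_le_mul_of_nonneg_right hcy hA0
    rw [driftLaplacian_quadratic]
    linarith [(abs_le.1 (hL x hx y hy)).1]
  · rintro ⟨x, y⟩ hp
    rw [frontier_prod_eq, closure_Icc, closure_Icc, frontier_Icc (by norm_num),
      frontier_Icc (by norm_num)] at hp
    have hpar {x : ℝ} (hx : x ∈ Set.Icc (0 : ℝ) 1) : 0 ≤ κ * (x * (1 - x)) + A * x :=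
      add_nonneg (mul_nonneg hκ0 (mul_nonneg hx.1 (sub_nonneg.2 hx.2))) (mul_nonneg hA0 hx.1)
    rcases hp with ⟨hx, hy⟩ | ⟨hx, hy⟩
    · have hbound := (abs_le.1 (hA x hx y (by rcases hy with rfl | rfl <;> norm_num))).2
      have hy2 : y ^ 2 = 1 := by rcases hy with rfl | rfl <;> norm_num
      simp only [hy2]
      linarith [hpar hx]
    · have hnonneg : 0 ≤ A * y ^ 2 := by positivity
      rcases hx with rfl | rfl
      · simpa [hv0] using hnonneg
      · linarith [(abs_le.1 (hA 1 (by norm_num) y hy)).2]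

lemma pdx_zero_le_of_driftLaplacian_bound (hv : ContDiff ℝ 2 (fun p : ℝ × ℝ => v p.1 p.2))
    (hv0 : ∀ t, v 0 t = 0) {A B : ℝ}
    (hA : ∀ s ∈ Set.Icc (0 : ℝ) 1, ∀ t ∈ Set.Icc (-1 : ℝ) 1, |v s t| ≤ A)
    (hL : ∀ s ∈ Set.Icc (0 : ℝ) 1, ∀ t ∈ Set.Icc (-1 : ℝ) 1, |driftLaplacian c v s t| ≤ B) :
    pdx v 0 0 ≤ 2 * A + |c| * A + B / 2 := by
  refine le_of_forall_gt_imp_ge_of_dense fun κ' hκ' => ?_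
  have hB : 0 ≤ B := (abs_nonneg _).trans (hL 0 (by norm_num) 0 (by norm_num))
  have hslope := (hasDerivWithinAt_iff_tendsto_slope' Set.self_notMem_Ioi).1
    ((hasDerivAt_pdx_s3 (hv.of_le one_le_two) 0 0).hasDerivWithinAt (s := Set.Ioi 0))
  have hA0 : 0 ≤ A := (abs_nonneg _).trans (hA 0 (by norm_num) 0 (by norm_num))
  refine le_of_tendsto hslope ?_
  filter_upwards [Ioo_mem_nhdsGT (zero_lt_one' ℝ)] with s hs
  have hle := le_barrier_of_driftLaplacian_bound (κ := κ' - A) hv hv0 (by linarith) hB hA hL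
    (Set.Ioo_subset_Icc_self hs) (t := 0) (by norm_num)
  have hκ0 : 0 ≤ (κ' - A) * s ^ 2 := by
    have := mul_nonneg (abs_nonneg c) hA0
    exact mul_nonneg (by linarith) (sq_nonneg s)
  rw [slope_def_field, hv0, sub_zero, sub_zero, div_le_iff₀ hs.1]
  linarith

/-- The odd part of `w` in `x` about `a` vanishes on the line `x = a`, which makes the estimate at
the boundary of a half square an interior estimate. -/
lemma pdx_le_of_driftLaplacian_bound (hw : ContDiff ℝ 2 (fun p : ℝ × ℝ => w p.1 p.2))
    {a b M N : ℝ} (hM : ∀ p ∈ closedBall (a, b) 1, |w p.1 p.2| ≤ M)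
    (hN : ∀ p ∈ closedBall (a, b) 1, |driftLaplacian c w p.1 p.2| ≤ N) :
    pdx w a b ≤ (2 + |c|) * M + N / 2 := by
  have hadd : ContDiff ℝ 2 (fun p : ℝ × ℝ => w (a + p.1) (b + p.2)) :=
    hw.comp (f := fun p : ℝ × ℝ => (a + p.1, b + p.2)) (by fun_prop)
  have hsub : ContDiff ℝ 2 (fun p : ℝ × ℝ => w (a - p.1) (b + p.2)) :=
    hw.comp (f := fun p : ℝ × ℝ => (a - p.1, b + p.2)) (by fun_prop)
  have hmem {s t : ℝ} (hs : s ∈ Set.Icc (0 : ℝ) 1) (ht : t ∈ Set.Icc (-1 : ℝ) 1) :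
      (a + s, b + t) ∈ closedBall (a, b) 1 ∧ (a - s, b + t) ∈ closedBall (a, b) 1 := by
    have hs' : |s| ≤ 1 := abs_le.2 ⟨by linarith [hs.1], hs.2⟩
    simp [← closedBall_prod_same, hs', abs_le.2 ht]
  have hodd := pdx_zero_le_of_driftLaplacian_bound (c := c) (A := 2 * M) (B := 2 * N)
    (v := fun s t => w (a + s) (b + t) - w (a - s) (b + t)) (hadd.sub hsub) (by simp)
    (fun s hs t ht => (abs_sub _ _).trans <| by
      linarith [hM _ (hmem hs ht).1, hM _ (hmem hs ht).2])
    (fun s hs t ht => by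
      rw [driftLaplacian_sub hadd hsub, driftLaplacian_comp_const_add,
        driftLaplacian_comp_const_sub]
      exact (abs_sub _ _).trans (by linarith [hN _ (hmem hs ht).1, hN _ (hmem hs ht).2]))
  have hderiv : pdx (fun s t => w (a + s) (b + t) - w (a - s) (b + t)) 0 0 = 2 * pdx w a b := by
    have hdiff (x : ℝ) := hasDerivAt_pdx_s3 (hw.of_le one_le_two) x b
    have h := ((hdiff (a + 0)).comp_const_add a 0).sub ((hdiff (a - 0)).comp_const_sub a 0)
    simp only [add_zero, sub_zero] at h
    change deriv (fun s => w (a + s) (b + 0) - w (a - s) (b + 0)) 0 = _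
    rw [add_zero]
    exact h.deriv.trans (by ring)
  rw [hderiv] at hodd
  linarith

lemma abs_pdx_le_of_driftLaplacian_bound (hw : ContDiff ℝ 2 (fun p : ℝ × ℝ => w p.1 p.2))
    {a b M N : ℝ} (hM : ∀ p ∈ closedBall (a, b) 1, |w p.1 p.2| ≤ M)
    (hN : ∀ p ∈ closedBall (a, b) 1, |driftLaplacian c w p.1 p.2| ≤ N) :
    |pdx w a b| ≤ (2 + |c|) * M + N / 2 := by
  have hneg := pdx_le_of_driftLaplacian_bound (c := c) (w := fun x y => -w x y) hw.neg
    (by simpa using hM) (by simpa only [driftLaplacian_neg, abs_neg] using hN)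
  have hderiv : pdx (fun x y => -w x y) a b = -pdx w a b := deriv.fun_neg
  exact abs_le'.2 ⟨pdx_le_of_driftLaplacian_bound hw hM hN, hderiv ▸ hneg⟩

lemma abs_pdy_le_of_laplacian_bound (hw : ContDiff ℝ 2 (fun p : ℝ × ℝ => w p.1 p.2))
    {a b M N : ℝ} (hM : ∀ p ∈ closedBall (a, b) 1, |w p.1 p.2| ≤ M)
    (hN : ∀ p ∈ closedBall (a, b) 1, |driftLaplacian 0 w p.1 p.2| ≤ N) :
    |pdy w a b| ≤ 2 * M + N / 2 := by
  have hswap {p : ℝ × ℝ} (hp : p ∈ closedBall (b, a) 1) : p.swap ∈ closedBall (a, b) 1 := by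
    simpa [← closedBall_prod_same, and_comm] using hp
  have h := abs_pdx_le_of_driftLaplacian_bound (c := 0) (w := fun x y => w y x)
    (hw.comp (f := Prod.swap) (contDiff_snd.prodMk contDiff_fst)) (fun p hp => hM _ (hswap hp))
    (fun p hp => by rw [driftLaplacian_zero_swap]; exact hN _ (hswap hp))
  rw [abs_zero, add_zero] at h
  exact h

lemma abs_pdy_le_of_driftLaplacian_bound (hw : ContDiff ℝ 2 (fun p : ℝ × ℝ => w p.1 p.2))
    {a b M N : ℝ} (hM : ∀ p ∈ closedBall (a, b) 1, |w p.1 p.2| ≤ M)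
    (hN : ∀ p ∈ closedBall (a, b) 1, |driftLaplacian c w p.1 p.2| ≤ N) :
    |pdy w a b| ≤ exp (|c| / 2) * (2 * M + (N + c ^ 2 / 4 * M) / 2) + |c| / 2 * M := by
  have hexp {p : ℝ × ℝ} (hp : p ∈ closedBall (a, b) 1) :
      exp (c / 2 * (p.2 - b)) ≤ exp (|c| / 2) := by
    have hp2 : |p.2 - b| ≤ 1 := (le_max_right _ _).trans hp
    refine exp_le_exp.2 ((le_abs_self _).trans ?_)
    rw [abs_mul, abs_div, abs_two]
    exact mul_le_of_le_one_right (by positivity) hp2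
  have hgauge : ContDiff ℝ 2 (fun p : ℝ × ℝ => exp (c / 2 * (p.2 - b)) * w p.1 p.2) :=
    (show ContDiff ℝ 2 (fun p : ℝ × ℝ => exp (c / 2 * (p.2 - b))) by fun_prop).mul hw
  have h := abs_pdy_le_of_laplacian_bound (a := a) (b := b) (M := exp (|c| / 2) * M)
    (N := exp (|c| / 2) * (N + c ^ 2 / 4 * M)) (w := fun x y => exp (c / 2 * (y - b)) * w x y)
    hgauge
    (fun p hp => by
      rw [abs_mul, abs_exp]
      exact mul_le_mul (hexp hp) (hM p hp) (abs_nonneg _) (exp_pos _).le)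
    (fun p hp => by
      rw [driftLaplacian_zero_exp_mul hw, abs_mul, abs_exp]
      refine mul_le_mul (hexp hp) ((abs_add_le _ _).trans (add_le_add (hN p hp) ?_))
        (abs_nonneg _) (exp_pos _).le
      rw [abs_mul, abs_of_nonneg (by positivity)]
      exact mul_le_mul_of_nonneg_left (hM p hp) (by positivity))
  have hzeroth : |c / 2 * w a b| ≤ |c| / 2 * M := by
    rw [abs_mul, abs_div, abs_two]
    exact mul_le_mul_of_nonneg_left (hM (a, b) (mem_closedBall_self zero_le_one)) (by positivity)
  simp only [pdy_exp_mul (hw.of_le one_le_two), sub_self, mul_zero, exp_zero, one_mul] at h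
  have htri := abs_sub (pdy w a b + c / 2 * w a b) (c / 2 * w a b)
  rw [add_sub_cancel_right] at htri
  linarith

lemma exists_abs_grad_le (c K : ℝ) : ∃ C, 0 < C ∧ ∀ w : ℝ → ℝ → ℝ,
    ContDiff ℝ 2 (fun p : ℝ × ℝ => w p.1 p.2) →
    (∀ x y, |driftLaplacian c w x y| ≤ K * |w x y|) →
    ∀ a b M, (∀ p ∈ closedBall (a, b) 1, |w p.1 p.2| ≤ M) →
    |pdx w a b| ≤ C * M ∧ |pdy w a b| ≤ C * M := by
  refine ⟨2 + |c| + |K| + exp (|c| / 2) * (2 + |K| + c ^ 2), by positivity, ?_⟩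
  intro w hw hK a b M hM
  have hM0 : 0 ≤ M := (abs_nonneg _).trans (hM (a, b) (mem_closedBall_self zero_le_one))
  have hN : ∀ p ∈ closedBall (a, b) 1, |driftLaplacian c w p.1 p.2| ≤ |K| * M := fun p hp =>
    (hK p.1 p.2).trans (mul_le_mul (le_abs_self K) (hM p hp) (abs_nonneg _) (abs_nonneg K))
  have hKM : 0 ≤ |K| * M := by positivity
  have hcM : 0 ≤ |c| * M := by positivity
  have hE : 0 ≤ exp (|c| / 2) * (c ^ 2 * M) := by positivity
  have hEK : 0 ≤ exp (|c| / 2) * (|K| * M) := by positivity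
  have hEM : 0 ≤ exp (|c| / 2) * M := by positivity
  constructor
  · refine (abs_pdx_le_of_driftLaplacian_bound hw hM hN).trans ?_
    linarith
  · refine (abs_pdy_le_of_driftLaplacian_bound hw hM hN).trans ?_
    linarith

end GradientEstimate

section GradientDecay

variable {c K : ℝ} {w : ℝ → ℝ → ℝ}

lemma exists_abs_grad_le_of_bounded (hw : ContDiff ℝ 2 (fun p : ℝ × ℝ => w p.1 p.2))
    (hK : ∀ x y, |driftLaplacian c w x y| ≤ K * |w x y|) {M : ℝ} (hM : ∀ x y, |w x y| ≤ M) :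
    ∃ G, ∀ x y, |pdx w x y| ≤ G ∧ |pdy w x y| ≤ G := by
  obtain ⟨C, -, hC⟩ := exists_abs_grad_le c K
  exact ⟨C * M, fun x y => hC w hw hK x y M fun p _ => hM p.1 p.2⟩

lemma tendsto_grad_zero (hw : ContDiff ℝ 2 (fun p : ℝ × ℝ => w p.1 p.2))
    (hK : ∀ x y, |driftLaplacian c w x y| ≤ K * |w x y|) {ι : Type*} {l : Filter ι}
    {q : ι → ℝ × ℝ}
    (hlim : ∀ ε > 0, ∀ᶠ i in l, ∀ p ∈ closedBall (q i) 1, |w p.1 p.2| ≤ ε) :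
    Tendsto (fun i => pdx w (q i).1 (q i).2) l (𝓝 0) ∧
      Tendsto (fun i => pdy w (q i).1 (q i).2) l (𝓝 0) := by
  obtain ⟨C, hC, hgrad⟩ := exists_abs_grad_le c K
  have hsmall (ε : ℝ) (hε : 0 < ε) : ∀ᶠ i in l,
      |pdx w (q i).1 (q i).2| < ε ∧ |pdy w (q i).1 (q i).2| < ε := by
    filter_upwards [hlim (ε / (2 * C)) (by positivity)] with i hi
    have hbound := hgrad w hw hK (q i).1 (q i).2 _ hi
    rw [show C * (ε / (2 * C)) = ε / 2 by field_simp] at hbound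
    exact ⟨hbound.1.trans_lt (half_lt_self hε), hbound.2.trans_lt (half_lt_self hε)⟩
  exact ⟨NormedAddGroup.tendsto_nhds_zero.2 fun ε hε => (hsmall ε hε).mono fun _ h => h.1,
    NormedAddGroup.tendsto_nhds_zero.2 fun ε hε => (hsmall ε hε).mono fun _ h => h.2⟩

lemma tendsto_grad_zero_of_tendsto_translates {B : ℝ}
    (hw : ContDiff ℝ 2 (fun p : ℝ × ℝ => w p.1 p.2))
    (hK : ∀ x y, |driftLaplacian c w x y| ≤ K * |w x y|)
    (hB : ∀ x y, |w x y| ≤ B) {ι : Type*} {l : Filter ι} {q : ι → ℝ × ℝ}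
    (hlim : ∀ p : ℝ × ℝ, Tendsto (fun i => w ((q i).1 + p.1) ((q i).2 + p.2)) l (𝓝 0)) :
    Tendsto (fun i => pdx w (q i).1 (q i).2) l (𝓝 0) ∧
      Tendsto (fun i => pdy w (q i).1 (q i).2) l (𝓝 0) := by
  obtain ⟨G, hG⟩ := exists_abs_grad_le_of_bounded hw hK hB
  obtain ⟨k, hk⟩ := exists_lipschitzWith_of_abs_grad_le (hw.of_le one_le_two) hG
  have huniform : TendstoUniformlyOn (fun i (p : ℝ × ℝ) => w ((q i).1 + p.1) ((q i).2 + p.2))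
      (fun _ => 0) l (closedBall 0 1) :=
    tendstoUniformlyOn_of_forall_lipschitzWith
      (fun i => mul_one k ▸ hk.comp (isometry_add_left (q i)).lipschitz)
      (isCompact_closedBall 0 1) fun p _ => hlim p
  refine tendsto_grad_zero hw hK fun ε hε => ?_
  filter_upwards [tendstoUniformlyOn_iff.1 huniform ε hε] with i hi p hp
  have h := hi (p - q i) (mem_closedBall_zero_iff.2 (mem_closedBall_iff_norm.1 hp))
  simpa using h.le

end GradientDecay

section BalancedPotential

variable {F : ℝ → ℝ}

/-- A `C²` potential for which `±1` are equilibria of equal energy `0`, so that the momentum flux of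
a wave vanishes in its limits `±1`. -/
structure IsBalancedPotential (F : ℝ → ℝ) : Prop where
  contDiff : ContDiff ℝ 2 F
  deriv_neg_one : deriv F (-1) = 0
  deriv_one : deriv F 1 = 0
  neg_one : F (-1) = 0
  one : F 1 = 0

lemma BalancedDoubleWell.isBalancedPotential (hF : BalancedDoubleWell F) :
    IsBalancedPotential F where
  contDiff := hF.1.of_le (by norm_num)
  deriv_neg_one := hF.2.1
  deriv_one := hF.2.2.1
  neg_one := hF.2.2.2.2.2.2.2.1
  one := hF.2.2.2.2.2.2.2.2

lemma BalancedDoubleWell.zero_pos (hF : BalancedDoubleWell F) : 0 < F 0 := by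
  obtain ⟨hF3, -, -, -, -, hderiv, -, hneg_one, -⟩ := hF
  have hmono : StrictMonoOn F (Set.Icc (-1) 0) :=
    strictMonoOn_of_deriv_pos (convex_Icc _ _) hF3.continuous.continuousOn
      (by rwa [interior_Icc])
  have hlt := hmono (by norm_num) (by norm_num) neg_one_lt_zero
  rwa [hneg_one] at hlt

end BalancedPotential

section Solution

variable {F : ℝ → ℝ} {c : ℝ} {u : ℝ → ℝ → ℝ}

lemma IsSolution.driftLaplacian_eq (hu : IsSolution F c u) :
    driftLaplacian c u = fun x y => deriv F (u x y) :=
  funext₂ hu.2.1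

lemma IsSolution.contDiff_two (hu : IsSolution F c u) :
    ContDiff ℝ 2 (fun p : ℝ × ℝ => u p.1 p.2) :=
  hu.1.of_le (by norm_num)

lemma IsSolution.contDiff_two_pdx (hu : IsSolution F c u) :
    ContDiff ℝ 2 (fun p : ℝ × ℝ => pdx u p.1 p.2) :=
  contDiff_pdx_s3 (by norm_num) hu.1

lemma IsSolution.contDiff_two_pdy (hu : IsSolution F c u) :
    ContDiff ℝ 2 (fun p : ℝ × ℝ => pdy u p.1 p.2) :=
  contDiff_pdy_s3 (by norm_num) hu.1

lemma IsSolution.driftLaplacian_pdy_eq (hF : ContDiff ℝ 2 F) (hu : IsSolution F c u) (x y : ℝ) :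
    driftLaplacian c (pdy u) x y = deriv (deriv F) (u x y) * pdy u x y := by
  have hF' : HasDerivAt (deriv F) (deriv (deriv F) (u x y)) (u x y) :=
    (hF.differentiable_deriv_two _).hasDerivAt
  rw [driftLaplacian_pdy hu.1, hu.driftLaplacian_eq]
  exact (hF'.comp y (hasDerivAt_pdy_s3 (hu.1.of_le (by norm_num)) x y)).deriv

lemma IsSolution.exists_abs_driftLaplacian_sub_le (hF : ContDiff ℝ 2 F) (hu : IsSolution F c u)
    {σ : ℝ} (hσ : |σ| ≤ 1) (hFσ : deriv F σ = 0) :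
    ∃ K, ∀ x y, |driftLaplacian c (fun x y => u x y - σ) x y| ≤ K * |u x y - σ| := by
  have hF' : ContDiff ℝ 1 (deriv F) := hF.deriv'
  obtain ⟨K, hK⟩ := hF'.contDiffOn.exists_lipschitzOnWith one_ne_zero (convex_Icc (-1 : ℝ) 1)
    isCompact_Icc
  refine ⟨K, fun x y => ?_⟩
  simpa only [driftLaplacian_sub_const, hu.driftLaplacian_eq, hFσ, sub_zero, norm_eq_abs]
    using hK.norm_sub_le (abs_le.1 (hu.2.2.1 x y)) (abs_le.1 hσ)

lemma IsSolution.exists_abs_driftLaplacian_pdy_le (hF : ContDiff ℝ 2 F)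
    (hu : IsSolution F c u) :
    ∃ K, ∀ x y, |driftLaplacian c (pdy u) x y| ≤ K * |pdy u x y| := by
  have hF' : ContDiff ℝ 1 (deriv F) := hF.deriv'
  obtain ⟨K, hK⟩ := isCompact_Icc.exists_bound_of_continuousOn (s := Set.Icc (-1 : ℝ) 1)
    hF'.continuous_deriv_one.continuousOn
  refine ⟨K, fun x y => ?_⟩
  rw [hu.driftLaplacian_pdy_eq hF, abs_mul]
  exact mul_le_mul_of_nonneg_right (hK _ (abs_le.1 (hu.2.2.1 x y))) (abs_nonneg _)

lemma IsSolution.exists_abs_grad_le (hF : IsBalancedPotential F) (hu : IsSolution F c u) :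
    ∃ G, ∀ x y, |pdx u x y| ≤ G ∧ |pdy u x y| ≤ G := by
  obtain ⟨K, hK⟩ := hu.exists_abs_driftLaplacian_sub_le hF.contDiff (by simp) hF.deriv_one
  obtain ⟨G, hG⟩ := exists_abs_grad_le_of_bounded (M := 2) (hu.contDiff_two.sub contDiff_const) hK
    fun x y => (abs_sub _ _).trans (by linarith [hu.2.2.1 x y, abs_one (α := ℝ)])
  exact ⟨G, fun x y => by simpa only [pdx, pdy, deriv_sub_const] using hG x y⟩

lemma IsSolution.exists_abs_grad_pdy_le (hF : IsBalancedPotential F) (hu : IsSolution F c u) :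
    ∃ G, ∀ x y, |pdx (pdy u) x y| ≤ G ∧ |pdy (pdy u) x y| ≤ G := by
  obtain ⟨K, hK⟩ := hu.exists_abs_driftLaplacian_pdy_le hF.contDiff
  obtain ⟨G, hG⟩ := hu.exists_abs_grad_le hF
  exact exists_abs_grad_le_of_bounded hu.contDiff_two_pdy hK fun x y => (hG x y).2

end Solution

section MomentumFlux

variable {F : ℝ → ℝ} {c : ℝ} {u : ℝ → ℝ → ℝ}

/-- The flux of `y`-momentum in the `y` direction. -/
noncomputable def momentumFlux (F : ℝ → ℝ) (u : ℝ → ℝ → ℝ) (x y : ℝ) : ℝ :=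
  pdx u x y ^ 2 / 2 - pdy u x y ^ 2 / 2 + F (u x y)

lemma contDiff_momentumFlux (hF : ContDiff ℝ 1 F)
    (hu : ContDiff ℝ 2 (fun p : ℝ × ℝ => u p.1 p.2)) :
    ContDiff ℝ 1 (fun p : ℝ × ℝ => momentumFlux F u p.1 p.2) := by
  have hx : ContDiff ℝ 1 (fun p : ℝ × ℝ => pdx u p.1 p.2) := contDiff_pdx_s3 (by norm_num) hu
  have hy : ContDiff ℝ 1 (fun p : ℝ × ℝ => pdy u p.1 p.2) := contDiff_pdy_s3 (by norm_num) hu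
  exact (((hx.pow 2).div_const 2).sub ((hy.pow 2).div_const 2)).add
    (hF.comp (hu.of_le one_le_two))

lemma IsSolution.pdx_add_pdy_momentumFlux (hF : ContDiff ℝ 1 F) (hu : IsSolution F c u)
    (x y : ℝ) :
    pdx (fun x y => -(pdx u x y * pdy u x y)) x y + pdy (momentumFlux F u) x y =
      c * pdy u x y ^ 2 := by
  have hx := hu.contDiff_two_pdx.of_le one_le_two
  have hy := hu.contDiff_two_pdy.of_le one_le_two
  have hF' : HasDerivAt F (deriv F (u x y)) (u x y) :=
    (hF.differentiable one_ne_zero _).hasDerivAt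
  have hpdx : pdx (fun x y => -(pdx u x y * pdy u x y)) x y =
      -(pdx (pdx u) x y * pdy u x y + pdx u x y * pdx (pdy u) x y) :=
    ((hasDerivAt_pdx_s3 hx x y).mul (hasDerivAt_pdx_s3 hy x y)).neg.deriv
  have hpdy : pdy (momentumFlux F u) x y =
      pdx u x y * pdy (pdx u) x y - pdy u x y * pdy (pdy u) x y
        + deriv F (u x y) * pdy u x y := by
    refine (((((hasDerivAt_pdy_s3 hx x y).pow 2).div_const 2).sub
      (((hasDerivAt_pdy_s3 hy x y).pow 2).div_const 2)).add
      (hF'.comp y (hasDerivAt_pdy_s3 (hu.contDiff_two.of_le one_le_two) x y))).deriv.trans ?_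
    norm_num
    ring
  have heq : pdx (pdx u) x y + pdy (pdy u) x y + c * pdy u x y = deriv F (u x y) := hu.2.1 x y
  rw [hpdx, hpdy, pdx_pdy_comm hu.contDiff_two, ← heq]
  ring

/-- Monotonicity in `y` bounds the mass of `uᵧ` on a vertical segment by the oscillation of `u`. -/
lemma IsSolution.abs_integral_pdx_mul_pdy_le (hu : IsSolution F c u) {G : ℝ}
    (hG : ∀ x y, |pdx u x y| ≤ G) (x : ℝ) {s t : ℝ} (hst : s ≤ t) :
    |∫ y in s..t, -(pdx u x y * pdy u x y)| ≤ 2 * G := by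
  have hcont : Continuous (fun y => pdy u x y) :=
    hu.contDiff_two_pdy.continuous.comp (Continuous.prodMk_right x)
  have hmass : ∫ y in s..t, pdy u x y = u x t - u x s :=
    intervalIntegral.integral_eq_sub_of_hasDerivAt
      (fun y _ => hasDerivAt_pdy_s3 (hu.1.of_le (by norm_num)) x y) (hcont.intervalIntegrable _ _)
  have hosc : u x t - u x s ≤ 2 := by
    linarith [(abs_le.1 (hu.2.2.1 x t)).2, (abs_le.1 (hu.2.2.1 x s)).1]
  calc |∫ y in s..t, -(pdx u x y * pdy u x y)|
      ≤ ∫ y in s..t, G * pdy u x y := by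
        rw [← norm_eq_abs]
        refine intervalIntegral.norm_integral_le_of_norm_le hst
          (Eventually.of_forall fun y _ => ?_) ((hcont.const_mul G).intervalIntegrable _ _)
        rw [norm_neg, norm_mul, norm_eq_abs, norm_eq_abs, abs_of_pos (hu.2.2.2 x y)]
        exact mul_le_mul_of_nonneg_right (hG x y) (hu.2.2.2 x y).le
    _ = G * (u x t - u x s) := by rw [intervalIntegral.integral_const_mul, hmass]
    _ ≤ 2 * G := by
        rw [mul_comm]
        exact mul_le_mul_of_nonneg_right hosc ((abs_nonneg _).trans (hG 0 0))

lemma IsSolution.abs_integral_sq_pdy_sub_momentumFlux_le (hF : ContDiff ℝ 1 F)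
    (hu : IsSolution F c u) {G : ℝ} (hG : ∀ x y, |pdx u x y| ≤ G) (a b : ℝ) {s t : ℝ}
    (hst : s ≤ t) :
    |c * (∫ x in a..b, ∫ y in s..t, pdy u x y ^ 2) -
      ((∫ x in a..b, momentumFlux F u x t) - ∫ x in a..b, momentumFlux F u x s)| ≤ 4 * G := by
  have hflux := integral_integral_pdx_add_pdy (v := fun x y => -(pdx u x y * pdy u x y))
    ((hu.contDiff_two_pdx.mul hu.contDiff_two_pdy).neg.of_le one_le_two)
    (contDiff_momentumFlux hF hu.contDiff_two) a b s t
  simp_rw [hu.pdx_add_pdy_momentumFlux hF, intervalIntegral.integral_const_mul] at hflux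
  have ha := abs_le.1 (hu.abs_integral_pdx_mul_pdy_le hG a hst)
  have hb := abs_le.1 (hu.abs_integral_pdx_mul_pdy_le hG b hst)
  rw [hflux, abs_le]
  constructor <;> linarith

lemma IsSolution.exists_abs_momentumFlux_le (hF : IsBalancedPotential F)
    (hu : IsSolution F c u) : ∃ M, ∀ x y, |momentumFlux F u x y| ≤ M := by
  obtain ⟨G, hG⟩ := hu.exists_abs_grad_le hF
  obtain ⟨B, hB⟩ := isCompact_Icc.exists_bound_of_continuousOn (s := Set.Icc (-1 : ℝ) 1)
    hF.contDiff.continuous.continuousOn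
  refine ⟨G ^ 2 / 2 + G ^ 2 / 2 + B, fun x y => ?_⟩
  have hx := sq_le_sq' (abs_le.1 (hG x y).1).1 (abs_le.1 (hG x y).1).2
  have hy := sq_le_sq' (abs_le.1 (hG x y).2).1 (abs_le.1 (hG x y).2).2
  have hFu := abs_le.1 (hB (u x y) (abs_le.1 (hu.2.2.1 x y)))
  rw [momentumFlux, abs_le]
  constructor <;> linarith [sq_nonneg (pdx u x y), sq_nonneg (pdy u x y)]

lemma IsSolution.tendsto_momentumFlux (hF : ContDiff ℝ 2 F) (hu : IsSolution F c u) {σ : ℝ}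
    (hσ : |σ| ≤ 1) (hFσ : F σ = 0) (hF'σ : deriv F σ = 0) {ι : Type*} {l : Filter ι}
    {q : ι → ℝ × ℝ}
    (hlim : ∀ p : ℝ × ℝ, Tendsto (fun i => u ((q i).1 + p.1) ((q i).2 + p.2)) l (𝓝 σ)) :
    Tendsto (fun i => momentumFlux F u (q i).1 (q i).2) l (𝓝 0) := by
  obtain ⟨K, hK⟩ := hu.exists_abs_driftLaplacian_sub_le hF hσ hF'σ
  obtain ⟨hx, hy⟩ := tendsto_grad_zero_of_tendsto_translates (B := 2)
    (hu.contDiff_two.sub contDiff_const) hK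
    (fun x y => (abs_sub _ _).trans (by linarith [hu.2.2.1 x y]))
    fun p => by simpa using (hlim p).sub_const σ
  simp only [pdx, pdy, deriv_sub_const] at hx hy
  have hu0 : Tendsto (fun i => u (q i).1 (q i).2) l (𝓝 σ) := by simpa using hlim 0
  simpa [momentumFlux, pdx, pdy, Function.comp_def, hFσ] using
    (((hx.pow 2).div_const 2).sub ((hy.pow 2).div_const 2)).add
      ((hF.continuous.tendsto σ).comp hu0)

lemma IsTravelingWave.tendsto_momentumFlux_atTop (hF : IsBalancedPotential F)
    (hu : IsTravelingWave F c u) (x : ℝ) : Tendsto (momentumFlux F u x) atTop (𝓝 0) :=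
  hu.1.tendsto_momentumFlux hF.contDiff (by simp) hF.one hF.deriv_one (q := fun y => (x, y))
    fun p => (hu.2.1 (x + p.1)).comp (tendsto_atTop_add_const_right _ _ tendsto_id)

lemma IsTravelingWave.tendsto_momentumFlux_atBot (hF : IsBalancedPotential F)
    (hu : IsTravelingWave F c u) (x : ℝ) : Tendsto (momentumFlux F u x) atBot (𝓝 0) :=
  hu.1.tendsto_momentumFlux hF.contDiff (by simp) hF.neg_one hF.deriv_neg_one
    (q := fun y => (x, y))
    fun p => (hu.2.2 (x + p.1)).comp (tendsto_atBot_add_const_right _ _ tendsto_id)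

lemma IsSolution.tendsto_integral_momentumFlux (hF : IsBalancedPotential F)
    (hu : IsSolution F c u) {l : Filter ℝ} [l.IsCountablyGenerated]
    (hlim : ∀ x, Tendsto (momentumFlux F u x) l (𝓝 0)) (a b : ℝ) :
    Tendsto (fun y => ∫ x in a..b, momentumFlux F u x y) l (𝓝 0) := by
  obtain ⟨M, hM⟩ := hu.exists_abs_momentumFlux_le hF
  have hcont := (contDiff_momentumFlux (hF.contDiff.of_le one_le_two) hu.contDiff_two).continuous
  rw [← intervalIntegral.integral_zero (a := a) (b := b) (μ := volume)]
  exact intervalIntegral.tendsto_integral_filter_of_dominated_convergence (fun _ => M)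
    (Eventually.of_forall fun y =>
      (hcont.comp (Continuous.prodMk_left y)).aestronglyMeasurable)
    (Eventually.of_forall fun y => Eventually.of_forall fun x _ => hM x y)
    intervalIntegrable_const (Eventually.of_forall fun x _ => hlim x)

lemma IsTravelingWave.exists_abs_integral_momentumFlux_le (hF : IsBalancedPotential F)
    (hu : IsTravelingWave F c u) :
    ∃ B, ∀ a b y, a ≤ b → |∫ x in a..b, momentumFlux F u x y| ≤ B := by
  obtain ⟨G, hG⟩ := hu.1.exists_abs_grad_le hF
  refine ⟨4 * G, fun a b y hab => ?_⟩
  have htop := hu.1.tendsto_integral_momentumFlux hF (hu.tendsto_momentumFlux_atTop hF) a b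
  have hbot := hu.1.tendsto_integral_momentumFlux hF (hu.tendsto_momentumFlux_atBot hF) a b
  have hbal {s t : ℝ} (hst : s ≤ t) := abs_le.1 <| hu.1.abs_integral_sq_pdy_sub_momentumFlux_le
    (hF.contDiff.of_le one_le_two) (fun x y => (hG x y).1) a b hst
  have hnonneg {s t : ℝ} (hst : s ≤ t) : 0 ≤ ∫ x in a..b, ∫ y in s..t, pdy u x y ^ 2 :=
    intervalIntegral.integral_nonneg hab fun x _ =>
      intervalIntegral.integral_nonneg hst fun y _ => sq_nonneg _
  obtain hc | hc := le_total 0 c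
  · refine abs_le_of_tendsto_zero_of_le_add htop hbot (fun s t hst => ?_) y
    linarith [(hbal hst).2, mul_nonneg hc (hnonneg hst)]
  · rw [← abs_neg]
    refine abs_le_of_tendsto_zero_of_le_add (f := fun y => -∫ x in a..b, momentumFlux F u x y)
      (by simpa using htop.neg) (by simpa using hbot.neg) (fun s t hst => ?_) y
    linarith [(hbal hst).1, mul_nonpos_of_nonpos_of_nonneg hc (hnonneg hst)]

lemma IsTravelingWave.integrable_sq_pdy (hF : IsBalancedPotential F) (hc : c ≠ 0)
    (hu : IsTravelingWave F c u) : Integrable (fun p : ℝ × ℝ => pdy u p.1 p.2 ^ 2) := by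
  obtain ⟨G, hG⟩ := hu.1.exists_abs_grad_le hF
  obtain ⟨B, hB⟩ := hu.exists_abs_integral_momentumFlux_le hF
  refine integrable_of_forall_integral_integral_le (B := (4 * G + 2 * B) / |c|)
    (hu.1.contDiff_two_pdy.continuous.pow 2) (fun p => sq_nonneg _) fun r hr => ?_
  have hle : -r ≤ r := by linarith
  have hbal := abs_le.1 <| hu.1.abs_integral_sq_pdy_sub_momentumFlux_le
    (hF.contDiff.of_le one_le_two) (fun x y => (hG x y).1) (-r) r hle
  have htop := abs_le.1 (hB (-r) r r hle)
  have hbot := abs_le.1 (hB (-r) r (-r) hle)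
  rw [le_div_iff₀' (abs_pos.2 hc)]
  refine (mul_le_mul_of_nonneg_left (le_abs_self _) (abs_nonneg c)).trans ?_
  rw [← abs_mul, abs_le]
  constructor <;> linarith

end MomentumFlux

section HorizontalEnergy

variable {F : ℝ → ℝ} {c : ℝ} {u : ℝ → ℝ → ℝ}

lemma IsTravelingWave.tendsto_pdy_cocompact (hF : IsBalancedPotential F) (hc : c ≠ 0)
    (hu : IsTravelingWave F c u) :
    Tendsto (fun p : ℝ × ℝ => pdy u p.1 p.2) (cocompact (ℝ × ℝ)) (𝓝 0) := by
  obtain ⟨G, hG⟩ := hu.1.exists_abs_grad_le hF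
  obtain ⟨G', hG'⟩ := hu.1.exists_abs_grad_pdy_le hF
  obtain ⟨K, hK⟩ := exists_lipschitzWith_of_abs_grad_le
    (hu.1.contDiff_two_pdy.of_le one_le_two) hG'
  have hsq : UniformContinuousOn (fun s : ℝ => s ^ 2) (Set.Icc (-G) G) :=
    isCompact_Icc.uniformContinuousOn_of_continuous (continuous_pow 2).continuousOn
  have huniform : UniformContinuous (fun p : ℝ × ℝ => pdy u p.1 p.2 ^ 2) :=
    uniformContinuousOn_univ.1 <| hsq.comp hK.uniformContinuous.uniformContinuousOn
      fun p _ => abs_le.1 (hG p.1 p.2).2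
  have h := (tendsto_zero_cocompact_of_uniformContinuous_of_integrable huniform
    (hu.integrable_sq_pdy hF hc)).sqrt
  simpa only [sqrt_zero, sqrt_sq (hu.1.2.2.2 _ _).le] using h

lemma IsTravelingWave.tendsto_pdyy_cocompact (hF : IsBalancedPotential F) (hc : c ≠ 0)
    (hu : IsTravelingWave F c u) :
    Tendsto (fun p : ℝ × ℝ => pdyy u p.1 p.2) (cocompact (ℝ × ℝ)) (𝓝 0) := by
  obtain ⟨K, hK⟩ := hu.1.exists_abs_driftLaplacian_pdy_le hF.contDiff
  refine (tendsto_grad_zero (q := id) hu.1.contDiff_two_pdy hK fun ε hε => ?_).2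
  refine eventually_cocompact_forall_closedBall ?_ 1
  exact (NormedAddGroup.tendsto_nhds_zero.1 (hu.tendsto_pdy_cocompact hF hc) ε hε).mono
    fun p hp => hp.le

/-- The energy of the horizontal slice `x ↦ u x y` as a solution of `u'' = F'(u)`. -/
noncomputable def horizontalEnergy (F : ℝ → ℝ) (u : ℝ → ℝ → ℝ) (x y : ℝ) : ℝ :=
  pdx u x y ^ 2 / 2 - F (u x y)

lemma IsSolution.hasDerivAt_horizontalEnergy (hF : ContDiff ℝ 1 F) (hu : IsSolution F c u)
    (x y : ℝ) :
    HasDerivAt (fun t => horizontalEnergy F u t y)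
      (-(pdx u x y * (pdyy u x y + c * pdy u x y))) x := by
  have hx := hasDerivAt_pdx_s3 (hu.contDiff_two_pdx.of_le one_le_two) x y
  have hF' : HasDerivAt F (deriv F (u x y)) (u x y) :=
    (hF.differentiable one_ne_zero _).hasDerivAt
  have heq : pdx (pdx u) x y + pdyy u x y + c * pdy u x y = deriv F (u x y) := hu.2.1 x y
  refine (((hx.pow 2).div_const 2).sub
    (hF'.comp x (hasDerivAt_pdx_s3 (hu.contDiff_two.of_le one_le_two) x y))).congr_deriv ?_
  rw [← heq]
  norm_num
  ring

lemma IsTravelingWave.tendsto_deriv_horizontalEnergy_cocompact (hF : IsBalancedPotential F)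
    (hc : c ≠ 0) (hu : IsTravelingWave F c u) :
    Tendsto (fun p : ℝ × ℝ => deriv (fun t => horizontalEnergy F u t p.2) p.1)
      (cocompact (ℝ × ℝ)) (𝓝 0) := by
  obtain ⟨G, hG⟩ := hu.1.exists_abs_grad_le hF
  simp_rw [(hu.1.hasDerivAt_horizontalEnergy (hF.contDiff.of_le one_le_two) _ _).deriv]
  have hsum : Tendsto (fun p : ℝ × ℝ => pdyy u p.1 p.2 + c * pdy u p.1 p.2)
      (cocompact (ℝ × ℝ)) (𝓝 0) := by
    simpa using (hu.tendsto_pdyy_cocompact hF hc).add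
      ((hu.tendsto_pdy_cocompact hF hc).const_mul c)
  rw [← neg_zero]
  exact (bdd_le_mul_tendsto_zero' G (Eventually.of_forall fun p => (hG p.1 p.2).1) hsum).neg

lemma neg_horizontalEnergy_sub_le_momentumFlux (x y : ℝ) :
    -horizontalEnergy F u x y - pdy u x y ^ 2 / 2 ≤ momentumFlux F u x y := by
  rw [horizontalEnergy, momentumFlux]
  linarith [sq_nonneg (pdx u x y)]

lemma IsTravelingWave.eventually_le_momentumFlux_of_horizontalEnergy_le
    (hF : IsBalancedPotential F) (hc : c ≠ 0) (hu : IsTravelingWave F c u) {m L : ℝ}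
    (hm : 0 < m) (hL : 0 < L) :
    ∀ᶠ p in cocompact (ℝ × ℝ), horizontalEnergy F u p.1 p.2 ≤ -m →
      ∀ t ∈ Set.Icc p.1 (p.1 + L), m / 4 ≤ momentumFlux F u t p.2 := by
  have hderiv := NormedAddGroup.tendsto_nhds_zero.1
    (hu.tendsto_deriv_horizontalEnergy_cocompact hF hc) (m / (2 * L)) (by positivity)
  have hsq := ((hu.tendsto_pdy_cocompact hF hc).pow 2).eventually_lt_const
    (show 0 ^ 2 < m / 2 by simpa using hm)
  filter_upwards [eventually_cocompact_forall_closedBall (hderiv.and hsq) L]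
    with ⟨x, y⟩ hball hle t ht
  have hsegment {s : ℝ} (hs : s ∈ Set.Icc x (x + L)) := hball (s, y) <| by
    rw [← closedBall_prod_same, Real.closedBall_eq_Icc]
    exact ⟨⟨by linarith [hs.1], hs.2⟩, mem_closedBall_self hL.le⟩
  have hincrement : |horizontalEnergy F u t y - horizontalEnergy F u x y| ≤ m / 2 :=
    calc |horizontalEnergy F u t y - horizontalEnergy F u x y| ≤ m / (2 * L) * |t - x| :=
          (convex_Icc x (x + L)).norm_image_sub_le_of_norm_deriv_le
            (f := fun t => horizontalEnergy F u t y)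
            (fun s _ => (hu.1.hasDerivAt_horizontalEnergy (hF.contDiff.of_le one_le_two)
              s y).differentiableAt)
            (fun s hs => (hsegment hs).1.le) (Set.left_mem_Icc.2 (by linarith)) ht
      _ ≤ m / (2 * L) * L := by
          rw [abs_of_nonneg (sub_nonneg.2 ht.1)]
          gcongr
          linarith [ht.2]
      _ = m / 2 := by field_simp
  linarith [(abs_le.1 hincrement).2, (hsegment ht).2,
    neg_horizontalEnergy_sub_le_momentumFlux (F := F) (u := u) t y]

/-- A definite negative energy would persist on a long horizontal segment and make the momentum
flux through it large. -/
lemma IsTravelingWave.eventually_neg_lt_horizontalEnergy (hF : IsBalancedPotential F)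
    (hc : c ≠ 0) (hu : IsTravelingWave F c u) {m : ℝ} (hm : 0 < m) :
    ∀ᶠ p in cocompact (ℝ × ℝ), -m < horizontalEnergy F u p.1 p.2 := by
  obtain ⟨B, hB⟩ := hu.exists_abs_integral_momentumFlux_le hF
  have hB0 : 0 ≤ B := (abs_nonneg _).trans (hB 0 0 0 le_rfl)
  obtain ⟨L, hL, hBL⟩ : ∃ L, 0 < L ∧ B < L * (m / 4) :=
    ⟨(B + 1) / (m / 4), by positivity, by rw [div_mul_cancel₀ _ (by positivity)]; linarith⟩
  have hcont (y : ℝ) : Continuous (fun t => momentumFlux F u t y) :=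
    (contDiff_momentumFlux (hF.contDiff.of_le one_le_two) hu.1.contDiff_two).continuous.comp
      (Continuous.prodMk_left y)
  filter_upwards [hu.eventually_le_momentumFlux_of_horizontalEnergy_le hF hc hm hL]
    with ⟨x, y⟩ hflux
  by_contra! hle
  refine hBL.not_ge ?_
  calc L * (m / 4) = ∫ _ in x..x + L, m / 4 := by simp [mul_div_assoc]
    _ ≤ ∫ t in x..x + L, momentumFlux F u t y :=
        intervalIntegral.integral_mono_on (by linarith) intervalIntegrable_const
          ((hcont y).intervalIntegrable _ _) (hflux hle)
    _ ≤ B := (le_abs_self _).trans (hB x (x + L) y (by linarith))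

lemma IsTravelingWave.eventually_lt_sq_pdx (hF : IsBalancedPotential F) (hc : c ≠ 0)
    (hu : IsTravelingWave F c u) {m : ℝ} (hm : 0 < m) :
    ∀ᶠ p in cocompact (ℝ × ℝ), m ≤ F (u p.1 p.2) → m < pdx u p.1 p.2 ^ 2 := by
  filter_upwards [hu.eventually_neg_lt_horizontalEnergy hF hc (half_pos hm)] with p hp hFu
  rw [horizontalEnergy] at hp
  linarith

lemma IsTravelingWave.tendsto_abs_pdx_div_pdy (hF : IsBalancedPotential F) (hc : c ≠ 0)
    (hu : IsTravelingWave F c u) {m : ℝ} (hm : 0 < m) :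
    Tendsto (fun p : ℝ × ℝ => |pdx u p.1 p.2| / pdy u p.1 p.2)
      (cocompact (ℝ × ℝ) ⊓ 𝓟 {p | m ≤ F (u p.1 p.2)}) atTop := by
  have hpdy : Tendsto (fun p : ℝ × ℝ => pdy u p.1 p.2) (cocompact (ℝ × ℝ)) (𝓝[>] 0) :=
    tendsto_nhdsWithin_iff.2
      ⟨hu.tendsto_pdy_cocompact hF hc, Eventually.of_forall fun p => hu.1.2.2.2 p.1 p.2⟩
  refine tendsto_atTop_mono' _ ?_
    ((hpdy.inv_tendsto_nhdsGT_zero.const_mul_atTop (sqrt_pos.2 hm)).mono_left inf_le_left)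
  rw [EventuallyLE, eventually_inf_principal]
  filter_upwards [hu.eventually_lt_sq_pdx hF hc hm] with p hp hFu
  have hsqrt : √m ≤ |pdx u p.1 p.2| :=
    (sqrt_le_sqrt (hp hFu).le).trans_eq (sqrt_sq_eq_abs _)
  exact mul_le_mul_of_nonneg_right hsqrt (inv_nonneg.2 (hu.1.2.2.2 p.1 p.2).le)

end HorizontalEnergy

theorem slope_tendsto_infinity_general {F : ℝ → ℝ} (hF : IsBalancedPotential F) {c : ℝ}
    (hc : c ≠ 0) {u : ℝ → ℝ → ℝ} (hu : IsTravelingWave F c u) {σ : ℝ} (hσ : 0 < F σ)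
    {γ : ℝ → ℝ} (hγ : Differentiable ℝ γ) (hγσ : ∀ x, u x (γ x) = σ) :
    Tendsto (fun x => |deriv γ x|) (cocompact ℝ) atTop := by
  have hslope (x : ℝ) : |deriv γ x| = |pdx u x (γ x)| / pdy u x (γ x) := by
    have hpos := hu.1.2.2.2 x (γ x)
    have h := pdx_add_pdy_mul_deriv_eq_zero (hu.1.1.of_le (by norm_num)) (hγ x) hγσ
    rw [eq_neg_of_add_eq_zero_left h, abs_neg, abs_mul, abs_of_pos hpos,
      mul_div_cancel_left₀ _ hpos.ne']
  have hgraph : Tendsto (fun x => (x, γ x)) (cocompact ℝ) (cocompact (ℝ × ℝ)) :=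
    Tendsto.of_tendsto_comp (g := Prod.fst) tendsto_id (comap_cocompact_le continuous_fst)
  have hlevel : ∀ᶠ x in cocompact ℝ, F σ ≤ F (u x (γ x)) :=
    Eventually.of_forall fun x => (congrArg F (hγσ x)).ge
  have hratio := (hu.tendsto_abs_pdx_div_pdy hF hc hσ).comp
    (tendsto_inf.2 ⟨hgraph, tendsto_principal.2 hlevel⟩)
  exact hratio.congr fun x => (hslope x).symm

/-- The slope of the zero level curve `y = γ(x)` blows up as `|x| → ∞`
(Lemma 2.2). -/
theorem slope_tendsto_infinity
    (F : ℝ → ℝ) (hF : BalancedDoubleWell F) (c : ℝ) (hc : 0 < c)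
    (u : ℝ → ℝ → ℝ) (hu : IsTravelingWave F c u)
    (γ : ℝ → ℝ) (hγ : ContDiff ℝ 1 γ)
    (hγlevel : ∀ x y : ℝ, u x y = 0 ↔ y = γ x) :
    Tendsto (fun x => |deriv γ x|) (cocompact ℝ) atTop :=
  slope_tendsto_infinity_general hF.isBalancedPotential hc.ne' hu hF.zero_pos
    (hγ.differentiable one_ne_zero) fun x => (hγlevel x (γ x)).2 rfl
end
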